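/- Fix n_{⋆,1}, n_{⋆,2}, n_{⋆,3} ∈ ℤ² and reals N₁, N₂, N₃ ≥ 1 with min(N₂,N₃) ≤ N₁, and let N_max be the maximum of (N₁,N₂,N₃). Let h : (ℤ²)⁴ → {0,1} be the tensor h_{n n₁ n₂ n₃} := 1 if n = n₁ − n₂ + n₃, n₂ ≠ n₁, n₂ ≠ n₃, and N_j ≤ ⟨n_j − n_{⋆,j}⟩ ≤ 2N_j for j = 1,2,3, and h_{n n₁ n₂ n₃} := 0 otherwise; for m ∈ ℤ let h^m_{n n₁ n₂ n₃} := h_{n n₁ n₂ n₃} · 1[κ(n,n₁,n₂,n₃) = m], where κ(n,n₁,n₂,n₃) := ⟨n⟩² − ⟨n₁⟩² + ⟨n₂⟩² − ⟨n₃⟩². Then for every θ > 0 there exists C = C(θ) > 0, independent of n_{⋆,1}, n_{⋆,2}, n_{⋆,3}, of N₁, N₂, N₃, and of m, such that ‖h‖₁ ≤ C · N_max · min(N₂,N₃) and sup_{m∈ℤ} ‖h^m‖₁ ≤ C · N_max^{1/2+θ} · min(N₂,N₃)^{1/2}, where ‖h‖₁ := max( ‖h‖_{n→n₁n₂n₃},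 ‖h‖_{n₁→nn₂n₃}, ‖h‖_{nn₂→n₁n₃}, ‖h‖_{nn₃→n₁n₂} ). -/

import Mathlib

/-!
Every tensor here has entries in `{0, 1}`, so by Schur's test (`schur_test`) each operator norm is
at most the square root of (entries per row) × (entries per column). Everything is thus a
question of counting lattice points.

Without the phase, two of the frequencies, in squares of size `N₂` and `N₃`, determine the rest, so
each norm is `O(N₂ N₃)`, and `N₂ N₃ = max(N₂, N₃) min(N₂, N₃)`.

On the hyperplane `n = n₁ - n₂ + n₃` the phase factorises as `κ = 2 (n₂ - n₁) · (n₂ - n₃)`. Hence,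
once two frequencies are fixed, the level set `κ = m` confines a third one to a line or to a circle.

* Circles (`circle_bound`): a square of size `N` contains `O(N ^ θ)` lattice points of any circle.
  Three distinct lattice points of a circle inside the square bound its radius by a power of `N`
  (`three_points_radius`, Cramer's rule), so a larger circle has at most two; on a smaller one the
  divisor bound in `ℤ[i]` applies (`two_squares_bound`). The result is uniform in the centre, the
  radius and the position of the square.
* Lines (`line_pairs_bound`): the lattice points of `x · y = M` are spaced by the primitive vector
  `p` in the direction of `x`, so a square of size `B` contains `O(B / |p| + 1)` of them. There are
  `O(A / |p| + 1)` vectors `x` of direction `p` in a square of size `A`, and the sum of `1 / |p|²`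
  over primitive `p` is only logarithmic. So there are `O(A max(A, B) ^ (1 + θ))` pairs
  `(x, y)` with `x ≠ 0`.

The gain `min(N₂, N₃)` arises as follows, with `X = max(N₁, N₂, N₃)`.

* `n → n₁n₂n₃`: `n` is determined by the output. For fixed `n`, if `N₃ ≤ N₂`, count the pairs
  `(n - n₃, n - n₁)` by lines, which gives `N₃ X ^ (1 + θ)`; if `N₂ ≤ N₃`, choose `n₂` freely and
  then `n₁` on a circle, which gives `N₂² X ^ θ ≤ N₂ X ^ (1 + θ)`.
* `n₁ → nn₂n₃`: the same with the pairs `(n₂ - n₁, n₂ - n₃)` if `N₂ ≤ N₃`, and with `n₃` free and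
  `n₂` on a circle if `N₃ ≤ N₂`.
* `nn₂ → n₁n₃`: rows and columns are both counted on circles, which gives `X ^ (2θ)`.
* `nn₃ → n₁n₂`: for a fixed output, `n₃` is on a line, and for a fixed input, so are `n₁` and `n₂`;
  this gives `N₃ min(N₁, N₂)`, which is at most `X min(N₂, N₃)`.
-/

noncomputable section

open scoped ENNReal

/-- `⟨n⟩² = 1 + |n|²` for `n ∈ ℤ²`. -/
def jbSq (n : ℤ × ℤ) : ℝ := 1 + (n.1 : ℝ) ^ 2 + (n.2 : ℝ) ^ 2

/-- `⟨n⟩` for `n ∈ ℤ²`. -/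
def jbZ (n : ℤ × ℤ) : ℝ := Real.sqrt (jbSq n)

/-- `⟨n⟩² = 1 + |n|²` as an integer. -/
def jbSqInt (n : ℤ × ℤ) : ℤ := 1 + n.1 ^ 2 + n.2 ^ 2

/-- The Schrödinger phase `κ(n,n₁,n₂,n₃) = ⟨n⟩² − ⟨n₁⟩² + ⟨n₂⟩² − ⟨n₃⟩²`. -/
def kappa (n n₁ n₂ n₃ : ℤ × ℤ) : ℤ :=
  jbSqInt n - jbSqInt n₁ + jbSqInt n₂ - jbSqInt n₃

/-- The base tensor `h_{n n₁ n₂ n₃}`: the indicator (with values in `{0,1}`) of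
`n = n₁ − n₂ + n₃`, `n₂ ≠ n₁`, `n₂ ≠ n₃` and `N_j ≤ ⟨n_j − n_{⋆,j}⟩ ≤ 2N_j`, `j = 1,2,3`. -/
def hTensor (a₁ a₂ a₃ : ℤ × ℤ) (N₁ N₂ N₃ : ℝ) (n n₁ n₂ n₃ : ℤ × ℤ) : ℂ :=
  if n = n₁ - n₂ + n₃ ∧ n₂ ≠ n₁ ∧ n₂ ≠ n₃ ∧
      N₁ ≤ jbZ (n₁ - a₁) ∧ jbZ (n₁ - a₁) ≤ 2 * N₁ ∧
      N₂ ≤ jbZ (n₂ - a₂) ∧ jbZ (n₂ - a₂) ≤ 2 * N₂ ∧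
      N₃ ≤ jbZ (n₃ - a₃) ∧ jbZ (n₃ - a₃) ≤ 2 * N₃
  then 1 else 0

/-- The tensor `h^m = h · 1[κ = m]`, supported on a fixed value `m` of the phase `κ`. -/
def hTensorK (a₁ a₂ a₃ : ℤ × ℤ) (N₁ N₂ N₃ : ℝ) (m : ℤ) (n n₁ n₂ n₃ : ℤ × ℤ) : ℂ :=
  if kappa n n₁ n₂ n₃ = m then hTensor a₁ a₂ a₃ N₁ N₂ N₃ n n₁ n₂ n₃ else 0

/-- The `ℓ²((ℤ²)^B) → ℓ²((ℤ²)^C)` operator norm for the grouping `n → n₁n₂n₃`. -/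
def opNorm_n (h : (ℤ × ℤ) → (ℤ × ℤ) → (ℤ × ℤ) → (ℤ × ℤ) → ℂ) : ℝ≥0∞ :=
  (⨆ (f : (ℤ × ℤ) → ℂ) (_ : (∑' n : ℤ × ℤ, ‖f n‖ ^ 2) = 1),
    ∑' m : (ℤ × ℤ) × (ℤ × ℤ) × (ℤ × ℤ),
      ENNReal.ofReal (‖∑' n : ℤ × ℤ, h n m.1 m.2.1 m.2.2 * f n‖ ^ 2)) ^ ((1 : ℝ) / 2)

/-- Operator norm for the grouping `n₁ → n n₂ n₃`. -/
def opNorm_n1 (h : (ℤ × ℤ) → (ℤ × ℤ) → (ℤ × ℤ) → (ℤ × ℤ) → ℂ) : ℝ≥0∞ :=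
  (⨆ (f : (ℤ × ℤ) → ℂ) (_ : (∑' n₁ : ℤ × ℤ, ‖f n₁‖ ^ 2) = 1),
    ∑' m : (ℤ × ℤ) × (ℤ × ℤ) × (ℤ × ℤ),
      ENNReal.ofReal (‖∑' n₁ : ℤ × ℤ, h m.1 n₁ m.2.1 m.2.2 * f n₁‖ ^ 2)) ^ ((1 : ℝ) / 2)

/-- Operator norm for the grouping `n n₂ → n₁ n₃`. -/
def opNorm_nn2 (h : (ℤ × ℤ) → (ℤ × ℤ) → (ℤ × ℤ) → (ℤ × ℤ) → ℂ) : ℝ≥0∞ :=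
  (⨆ (f : (ℤ × ℤ) × (ℤ × ℤ) → ℂ) (_ : (∑' q : (ℤ × ℤ) × (ℤ × ℤ), ‖f q‖ ^ 2) = 1),
    ∑' m : (ℤ × ℤ) × (ℤ × ℤ),
      ENNReal.ofReal (‖∑' q : (ℤ × ℤ) × (ℤ × ℤ), h q.1 m.1 q.2 m.2 * f q‖ ^ 2)) ^ ((1 : ℝ) / 2)

/-- Operator norm for the grouping `n n₃ → n₁ n₂`. -/
def opNorm_nn3 (h : (ℤ × ℤ) → (ℤ × ℤ) → (ℤ × ℤ) → (ℤ × ℤ) → ℂ) : ℝ≥0∞ :=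
  (⨆ (f : (ℤ × ℤ) × (ℤ × ℤ) → ℂ) (_ : (∑' q : (ℤ × ℤ) × (ℤ × ℤ), ‖f q‖ ^ 2) = 1),
    ∑' m : (ℤ × ℤ) × (ℤ × ℤ),
      ENNReal.ofReal (‖∑' q : (ℤ × ℤ) × (ℤ × ℤ), h q.1 m.1 m.2 q.2 * f q‖ ^ 2)) ^ ((1 : ℝ) / 2)

/-- Operator norm for the grouping `n n₁ → n₂ n₃`. -/
def opNorm_nn1 (h : (ℤ × ℤ) → (ℤ × ℤ) → (ℤ × ℤ) → (ℤ × ℤ) → ℂ) : ℝ≥0∞ :=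
  (⨆ (f : (ℤ × ℤ) × (ℤ × ℤ) → ℂ) (_ : (∑' q : (ℤ × ℤ) × (ℤ × ℤ), ‖f q‖ ^ 2) = 1),
    ∑' m : (ℤ × ℤ) × (ℤ × ℤ),
      ENNReal.ofReal (‖∑' q : (ℤ × ℤ) × (ℤ × ℤ), h q.1 q.2 m.1 m.2 * f q‖ ^ 2)) ^ ((1 : ℝ) / 2)

/-- The norm `‖h‖₁ = max( ‖h‖_{n→n₁n₂n₃}, ‖h‖_{n₁→nn₂n₃}, ‖h‖_{nn₂→n₁n₃}, ‖h‖_{nn₃→n₁n₂} )`. -/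
def tNorm1 (h : (ℤ × ℤ) → (ℤ × ℤ) → (ℤ × ℤ) → (ℤ × ℤ) → ℂ) : ℝ≥0∞ :=
  max (max (opNorm_n h) (opNorm_n1 h)) (max (opNorm_nn2 h) (opNorm_nn3 h))

/-- The norm `‖h‖₂ = max( ‖h‖_{n→n₁n₂n₃}, ‖h‖_{nn₁→n₂n₃} )`. -/
def tNorm2 (h : (ℤ × ℤ) → (ℤ × ℤ) → (ℤ × ℤ) → (ℤ × ℤ) → ℂ) : ℝ≥0∞ :=
  max (opNorm_n h) (opNorm_nn1 h)

/-! ### Cardinality bounds, Schur's test and squares in the lattice -/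

/-- `CardLE s R`: the set `s` is finite and has at most `R` elements, `R` being a real number. -/
def CardLE {α : Type*} (s : Set α) (R : ℝ) : Prop := s.Finite ∧ (s.ncard : ℝ) ≤ R

theorem CardLE.mono {α : Type*} {s t : Set α} {R R' : ℝ} (h : CardLE t R) (hst : s ⊆ t)
    (hR : R ≤ R') : CardLE s R' :=
  ⟨h.1.subset hst, le_trans (by exact_mod_cast Set.ncard_le_ncard hst h.1) (h.2.trans hR)⟩

theorem CardLE.of_injOn {α β : Type*} {s : Set α} {t : Set β} {R : ℝ} (h : CardLE t R)
    (f : α → β) (hm : ∀ a ∈ s, f a ∈ t) (hi : Set.InjOn f s) : CardLE s R :=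
  ⟨Set.Finite.of_injOn hm hi h.1,
    le_trans (by exact_mod_cast Set.ncard_le_ncard_of_injOn f hm hi h.1) h.2⟩

theorem CardLE.of_subsingleton {α : Type*} {s : Set α} (h : s.Subsingleton) : CardLE s 1 :=
  ⟨h.finite, by exact_mod_cast (Set.ncard_le_one h.finite).2 fun a ha b hb => h ha hb⟩

/-- Counting a set of pairs fibre by fibre over a finite set of first coordinates. -/
theorem CardLE.of_fibers {α β : Type*} [DecidableEq α] {s : Set (α × β)} (F : Finset α)
    (w : α → ℝ) (hF : ∀ q ∈ s, q.1 ∈ F) (hw : ∀ a ∈ F, CardLE {b | (a, b) ∈ s} (w a)) :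
    CardLE s (∑ a ∈ F, w a) := by
  classical
  have hfin : ∀ a ∈ F, {b | (a, b) ∈ s}.Finite := fun a ha => (hw a ha).1
  let G : α → Finset β := fun a => if h : a ∈ F then (hfin a h).toFinset else ∅
  let T : Finset (Σ _ : α, β) := F.sigma G
  have hT : CardLE (T : Set (Σ _ : α, β)) (∑ a ∈ F, w a) := by
    refine ⟨T.finite_toSet, ?_⟩
    rw [Set.ncard_coe_finset, Finset.card_sigma]
    push_cast
    refine Finset.sum_le_sum fun a ha => ?_
    have := (hw a ha).2
    rwa [Set.ncard_eq_toFinset_card _ (hfin a ha),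
      show (hfin a ha).toFinset = G a by simp [G, ha]] at this
  refine hT.of_injOn (fun q => ⟨q.1, q.2⟩) ?_ ?_
  · intro q hq
    have := hF q hq
    simp [T, G, this, hq]
  · intro q _ q' _ h
    simp only [Sigma.mk.injEq, heq_eq_eq] at h
    exact Prod.ext h.1 h.2

theorem CardLE.prod_fibers {α β : Type*} {s : Set (α × β)} {t : Set α} {A B : ℝ}
    (ht : CardLE t A) (hB : 0 ≤ B) (hst : ∀ q ∈ s, q.1 ∈ t)
    (hs : ∀ a ∈ t, CardLE {b | (a, b) ∈ s} B) : CardLE s (A * B) := by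
  classical
  have := CardLE.of_fibers (s := s) ht.1.toFinset (fun _ => B)
    (fun q hq => by simpa using hst q hq) (fun a ha => hs a (by simpa using ha))
  refine this.mono subset_rfl ?_
  rw [Finset.sum_const, nsmul_eq_mul, ← Set.ncard_eq_toFinset_card _ ht.1]
  exact mul_le_mul_of_nonneg_right ht.2 hB

/-- Schur's test: a kernel bounded by `1` with at most `R₁` nonzero entries for each output index
and at most `R₂` for each input index has operator norm at most `√(R₁ R₂)`. -/
theorem schur_test {α β : Type*} (K : α → β → ℂ) {R₁ R₂ D : ℝ} (hK : ∀ a b, ‖K a b‖ ≤ 1)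
    (h₁ : ∀ b, CardLE {a | K a b ≠ 0} R₁) (h₂ : ∀ a, CardLE {b | K a b ≠ 0} R₂)
    (hD : 0 ≤ D) (hR : R₁ * R₂ ≤ D ^ 2) :
    (⨆ (f : α → ℂ) (_ : (∑' a, ‖f a‖ ^ 2) = 1),
      ∑' b, ENNReal.ofReal (‖∑' a, K a b * f a‖ ^ 2)) ^ ((1 : ℝ) / 2) ≤ ENNReal.ofReal D := by
  classical
  rw [show ENNReal.ofReal D = (ENNReal.ofReal (D ^ 2)) ^ ((1 : ℝ) / 2) by
    rw [ENNReal.ofReal_rpow_of_nonneg (sq_nonneg D) (by norm_num), ← Real.sqrt_eq_rpow,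
      Real.sqrt_sq hD]]
  refine ENNReal.rpow_le_rpow ?_ (by norm_num)
  refine iSup₂_le fun f hf => ?_
  have hsum : Summable fun a => ‖f a‖ ^ 2 := by
    by_contra h
    rw [tsum_eq_zero_of_not_summable h] at hf
    exact zero_ne_one hf
  rcases isEmpty_or_nonempty α with hα | ⟨⟨a₀⟩⟩
  · simp at hf
  rcases isEmpty_or_nonempty β with hβ | ⟨⟨b₀⟩⟩
  · simp
  have hR₁ : 0 ≤ R₁ := (Nat.cast_nonneg _).trans (h₁ b₀).2
  have hR₂ : 0 ≤ R₂ := (Nat.cast_nonneg _).trans (h₂ a₀).2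
  -- Cauchy-Schwarz in the input variable
  have key : ∀ b, ENNReal.ofReal (‖∑' a, K a b * f a‖ ^ 2) ≤
      ENNReal.ofReal R₁ * ∑' a, if K a b ≠ 0 then ENNReal.ofReal (‖f a‖ ^ 2) else 0 := by
    intro b
    set S := (h₁ b).1.toFinset with hS
    have hmem : ∀ a, a ∈ S ↔ K a b ≠ 0 := fun a => by simp [hS]
    have e1 : ∑' a, K a b * f a = ∑ a ∈ S, K a b * f a := by
      refine tsum_eq_sum fun a ha => ?_
      rw [hmem, not_not] at ha
      rw [ha, zero_mul]
    have e2 : (∑' a, if K a b ≠ 0 then ENNReal.ofReal (‖f a‖ ^ 2) else 0) =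
        ENNReal.ofReal (∑ a ∈ S, ‖f a‖ ^ 2) := by
      rw [tsum_eq_sum (s := S), ENNReal.ofReal_sum_of_nonneg fun a _ => by positivity]
      · refine Finset.sum_congr rfl fun a ha => ?_
        rw [if_pos ((hmem a).1 ha)]
      · intro a ha
        rw [hmem] at ha
        rw [if_neg ha]
    rw [e1, e2, ← ENNReal.ofReal_mul hR₁]
    refine ENNReal.ofReal_le_ofReal ?_
    have hc : (S.card : ℝ) ≤ R₁ := by
      have := (h₁ b).2
      rwa [Set.ncard_eq_toFinset_card _ (h₁ b).1] at this
    calc ‖∑ a ∈ S, K a b * f a‖ ^ 2 ≤ (∑ a ∈ S, ‖f a‖) ^ 2 := by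
          refine pow_le_pow_left₀ (norm_nonneg _) ((norm_sum_le _ _).trans ?_) 2
          refine Finset.sum_le_sum fun a _ => ?_
          rw [norm_mul]
          exact mul_le_of_le_one_left (norm_nonneg _) (hK a b)
      _ ≤ S.card * ∑ a ∈ S, ‖f a‖ ^ 2 := sq_sum_le_card_mul_sum_sq
      _ ≤ R₁ * ∑ a ∈ S, ‖f a‖ ^ 2 := by
          exact mul_le_mul_of_nonneg_right hc (Finset.sum_nonneg fun _ _ => by positivity)
  have col : ∀ a, (∑' b, if K a b ≠ 0 then ENNReal.ofReal (‖f a‖ ^ 2) else 0) ≤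
      ENNReal.ofReal R₂ * ENNReal.ofReal (‖f a‖ ^ 2) := by
    intro a
    set S := (h₂ a).1.toFinset with hS
    have hmem : ∀ b, b ∈ S ↔ K a b ≠ 0 := fun b => by simp [hS]
    have hc : (S.card : ℝ) ≤ R₂ := by
      have := (h₂ a).2
      rwa [Set.ncard_eq_toFinset_card _ (h₂ a).1] at this
    rw [tsum_eq_sum (s := S)]
    · rw [Finset.sum_congr rfl fun b hb => if_pos ((hmem b).1 hb), Finset.sum_const,
        nsmul_eq_mul]
      gcongr
      rw [← ENNReal.ofReal_natCast]
      exact ENNReal.ofReal_le_ofReal hc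
    · intro b hb
      rw [hmem] at hb
      rw [if_neg hb]
  calc ∑' b, ENNReal.ofReal (‖∑' a, K a b * f a‖ ^ 2)
      ≤ ∑' b, ENNReal.ofReal R₁ * ∑' a, if K a b ≠ 0 then ENNReal.ofReal (‖f a‖ ^ 2) else 0 :=
        ENNReal.tsum_le_tsum key
    _ = ENNReal.ofReal R₁ *
        ∑' a, ∑' b, if K a b ≠ 0 then ENNReal.ofReal (‖f a‖ ^ 2) else 0 := by
        rw [ENNReal.tsum_mul_left, ENNReal.tsum_comm]
    _ ≤ ENNReal.ofReal R₁ * ∑' a, ENNReal.ofReal R₂ * ENNReal.ofReal (‖f a‖ ^ 2) := by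
        gcongr with a
        exact col a
    _ = ENNReal.ofReal (R₁ * R₂) := by
        rw [ENNReal.tsum_mul_left, ← ENNReal.ofReal_tsum_of_nonneg (fun _ => by positivity) hsum,
          hf, ENNReal.ofReal_one, mul_one, ENNReal.ofReal_mul hR₁]
    _ ≤ ENNReal.ofReal (D ^ 2) := ENNReal.ofReal_le_ofReal hR

/-- The integer points of the closed square of centre `a` and half-side `r`. -/
def sqBox (a : ℤ × ℤ) (r : ℝ) : Set (ℤ × ℤ) :=
  {x | |(x.1 : ℝ) - a.1| ≤ r ∧ |(x.2 : ℝ) - a.2| ≤ r}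

theorem mem_sqBox_of_jbZ {x a : ℤ × ℤ} {r : ℝ} (h : jbZ (x - a) ≤ r) : x ∈ sqBox a r := by
  have h1 : ∀ t : ℝ, t ^ 2 ≤ jbSq (x - a) → |t| ≤ r := fun t ht =>
    (Real.abs_le_sqrt ht).trans h
  constructor
  · refine h1 _ ?_
    simp only [jbSq, Prod.fst_sub, Prod.snd_sub]
    push_cast
    nlinarith [sq_nonneg ((x.2 : ℝ) - a.2)]
  · refine h1 _ ?_
    simp only [jbSq, Prod.fst_sub, Prod.snd_sub]
    push_cast
    nlinarith [sq_nonneg ((x.1 : ℝ) - a.1)]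

theorem cardLE_interval (c r : ℝ) (hr : 0 ≤ r) : CardLE {t : ℤ | |(t : ℝ) - c| ≤ r} (2 * r + 1) := by
  have hsub : {t : ℤ | |(t : ℝ) - c| ≤ r} ⊆ (Finset.Icc ⌈c - r⌉ ⌊c + r⌋ : Finset ℤ) := by
    intro t ht
    have ht1 : |(t : ℝ) - c| ≤ r := ht
    have ht' := abs_le.1 ht1
    rw [Finset.coe_Icc, Set.mem_Icc, Int.ceil_le, Int.le_floor]
    constructor <;> linarith [ht'.1, ht'.2]
  refine CardLE.mono ⟨Finset.finite_toSet _, ?_⟩ hsub le_rfl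
  rw [Set.ncard_coe_finset, Int.card_Icc]
  have h1 := Int.floor_le (c + r)
  have h2 := Int.le_ceil (c - r)
  rcases le_total 0 (⌊c + r⌋ + 1 - ⌈c - r⌉) with h | h
  · have : (((⌊c + r⌋ + 1 - ⌈c - r⌉).toNat : ℤ) : ℝ) = ⌊c + r⌋ + 1 - ⌈c - r⌉ := by
      rw [Int.toNat_of_nonneg h]; push_cast; ring
    rw [Int.cast_natCast] at this
    rw [this]; linarith
  · rw [Int.toNat_of_nonpos h]; push_cast; linarith

/-- Elements of an interval of length `2r` in a fixed residue class modulo `k`. -/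
theorem cardLE_residue (s : Set ℤ) (c r : ℝ) (hr : 0 ≤ r) (k : ℤ) (hk : k ≠ 0)
    (hs : ∀ t ∈ s, |(t : ℝ) - c| ≤ r) (hmod : ∀ t ∈ s, ∀ t' ∈ s, k ∣ t - t') :
    CardLE s (2 * (r / |(k : ℝ)|) + 1) := by
  have hk' : 0 < |(k : ℝ)| := abs_pos.2 (by exact_mod_cast hk)
  have hk0 : (k : ℝ) ≠ 0 := by exact_mod_cast hk
  rcases s.eq_empty_or_nonempty with rfl | ⟨t₀, ht₀⟩
  · exact (CardLE.of_subsingleton Set.subsingleton_empty).mono subset_rfl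
      (by linarith [div_nonneg hr hk'.le])
  refine (cardLE_interval ((c - t₀) / k) (r / |(k : ℝ)|) (by positivity)).of_injOn
    (fun t => (t - t₀) / k) ?_ ?_
  · intro t ht
    obtain ⟨j, hj⟩ := hmod t ht t₀ ht₀
    have hj' : (t : ℝ) - t₀ = k * j := by exact_mod_cast hj
    simp only [Set.mem_ofPred_eq]
    rw [hj, Int.mul_ediv_cancel_left _ hk,
      show (j : ℝ) - (c - t₀) / k = (t - c) / k by field_simp; linarith, abs_div]
    gcongr
    exact hs t ht
  · intro t ht t' ht' h
    obtain ⟨j, hj⟩ := hmod t ht t₀ ht₀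
    obtain ⟨j', hj'⟩ := hmod t' ht' t₀ ht₀
    simp only [hj, hj', Int.mul_ediv_cancel_left _ hk] at h
    subst h
    linarith

theorem cardLE_sqBox (a : ℤ × ℤ) {N : ℝ} (hN : 1 ≤ N) : CardLE (sqBox a (2 * N)) (25 * N ^ 2) := by
  have h1 := fun c : ℤ => cardLE_interval c (2 * N) (by linarith)
  refine (CardLE.prod_fibers (h1 a.1) (B := 2 * (2 * N) + 1) (by linarith) (fun q hq => hq.1)
    (fun x _ => (h1 a.2).mono (fun y hy => hy.2) le_rfl)).mono subset_rfl ?_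
  nlinarith

theorem sqBox_sub_mem {a x n : ℤ × ℤ} {r : ℝ} (h : x ∈ sqBox a r) : n - x ∈ sqBox (n - a) r := by
  obtain ⟨h1, h2⟩ := h
  refine ⟨?_, ?_⟩
  · rw [abs_sub_comm] at h1; simp only [Prod.fst_sub]; push_cast
    rwa [show (n.1 : ℝ) - x.1 - (n.1 - a.1) = a.1 - x.1 by ring]
  · rw [abs_sub_comm] at h2; simp only [Prod.snd_sub]; push_cast
    rwa [show (n.2 : ℝ) - x.2 - (n.2 - a.2) = a.2 - x.2 by ring]

theorem sqBox_mem_sub {a x n : ℤ × ℤ} {r : ℝ} (h : x ∈ sqBox a r) : x - n ∈ sqBox (a - n) r := by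
  obtain ⟨h1, h2⟩ := h
  refine ⟨?_, ?_⟩
  · simp only [Prod.fst_sub]; push_cast
    rwa [show (x.1 : ℝ) - n.1 - (a.1 - n.1) = x.1 - a.1 by ring]
  · simp only [Prod.snd_sub]; push_cast
    rwa [show (x.2 : ℝ) - n.2 - (a.2 - n.2) = x.2 - a.2 by ring]

/-! ### Representations of an integer as a sum of two squares -/

/-- The local factors of the divisor bound: `x` stands for the norm of a prime and `e` for its
exponent. The number `e + 1` of divisors of the prime power is at most `x ^ (δ e)` if `x ≥ Q`, and
costs only a constant factor `K` for the finitely many smaller primes. -/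
theorem succ_le_const_mul_rpow {δ : ℝ} (hδ : 0 < δ) :
    ∃ K : ℝ, 1 ≤ K ∧ ∃ Q : ℝ, 1 ≤ Q ∧ ∀ (x : ℝ) (e : ℕ), 2 ≤ x →
      ((e : ℝ) + 1 ≤ K * (x ^ δ) ^ e) ∧ (Q ≤ x → (e : ℝ) + 1 ≤ (x ^ δ) ^ e) := by
  have hb : 1 < (2 : ℝ) ^ δ := Real.one_lt_rpow (by norm_num) hδ
  set b : ℝ := (2 : ℝ) ^ δ - 1 with hbdef
  have hb0 : 0 < b := by rw [hbdef]; linarith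
  refine ⟨max 1 (1 / b), le_max_left _ _, (2 : ℝ) ^ (1 / δ),
    Real.one_le_rpow (by norm_num) (by positivity), fun x e hx => ⟨?_, fun hQ => ?_⟩⟩
  · have h1 : 1 + b ≤ x ^ δ := by
      rw [hbdef, add_sub_cancel]
      exact Real.rpow_le_rpow (by norm_num) hx hδ.le
    have h2 : 1 + (e : ℝ) * b ≤ (1 + b) ^ e := one_add_mul_le_pow (by linarith) e
    have h3 : (1 + b) ^ e ≤ (x ^ δ) ^ e := pow_le_pow_left₀ (by linarith) h1 e
    have h4 : (e : ℝ) ≤ max 1 (1 / b) * (e * b) := by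
      calc (e : ℝ) = 1 / b * (e * b) := by field_simp
        _ ≤ _ := by gcongr; exact le_max_right _ _
    calc (e : ℝ) + 1 ≤ max 1 (1 / b) * (e * b) + max 1 (1 / b) :=
          add_le_add h4 (le_max_left _ _)
      _ = max 1 (1 / b) * (1 + e * b) := by ring
      _ ≤ _ := by gcongr; exact h2.trans h3
  · have h1 : 2 ≤ x ^ δ := by
      calc (2 : ℝ) = ((2 : ℝ) ^ (1 / δ)) ^ δ := by
            rw [← Real.rpow_mul (by norm_num), one_div_mul_cancel hδ.ne', Real.rpow_one]
        _ ≤ _ := Real.rpow_le_rpow (by positivity) hQ hδ.le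
    have h2 : 1 + (e : ℝ) * 1 ≤ (1 + 1) ^ e := one_add_mul_le_pow (by norm_num) e
    have h3 : ((1 : ℝ) + 1) ^ e ≤ (x ^ δ) ^ e := pow_le_pow_left₀ (by norm_num) (by linarith) e
    linarith

theorem gaussian_norm_eq (z : GaussianInt) : z.norm = z.re ^ 2 + z.im ^ 2 := by
  rw [Zsqrtd.norm_def]; ring

theorem finite_gaussian_norm_le (Q : ℝ) : {z : GaussianInt | (z.norm : ℝ) ≤ Q}.Finite := by
  obtain ⟨k, hk⟩ := exists_nat_ge Q
  refine Set.Finite.of_injOn (f := fun z : GaussianInt => (z.re, z.im))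
    (t := Set.Icc (-(k : ℤ)) k ×ˢ Set.Icc (-(k : ℤ)) k) ?_ ?_
    ((Set.finite_Icc _ _).prod (Set.finite_Icc _ _))
  · intro z hz
    have h1 : (z.norm : ℝ) ≤ k := le_trans hz hk
    have h2 : z.re ^ 2 + z.im ^ 2 ≤ (k : ℤ) := by
      rw [← gaussian_norm_eq]; exact_mod_cast h1
    simp only [Set.mem_prod, Set.mem_Icc]
    refine ⟨⟨?_, ?_⟩, ?_, ?_⟩ <;> nlinarith [sq_nonneg z.re, sq_nonneg z.im]
  · intro z _ w _ h
    simp only [Prod.mk.injEq] at h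
    exact Zsqrtd.ext h.1 h.2

/-- The divisor bound in `ℤ[i]`: a nonzero `z` has at most `C ‖z‖ ^ δ` divisors. -/
theorem gaussian_divisor_bound {δ : ℝ} (hδ : 0 < δ) :
    ∃ C : ℝ, 0 < C ∧ ∀ z : GaussianInt, z ≠ 0 →
      CardLE {w : GaussianInt | w ∣ z} (C * (z.norm : ℝ) ^ δ) := by
  classical
  let _ : StrongNormalizationMonoid GaussianInt :=
    UniqueFactorizationMonoid.strongNormalizationMonoid
  obtain ⟨K, hK, Q, hQ, hKQ⟩ := succ_le_const_mul_rpow hδ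
  set P : Finset GaussianInt := (finite_gaussian_norm_le Q).toFinset with hP
  have hPm : ∀ p : GaussianInt, p ∈ P ↔ (p.norm : ℝ) ≤ Q := fun p => by simp [hP]
  have hU : {u : GaussianInt | (u.norm : ℝ) ≤ 1}.Finite := finite_gaussian_norm_le 1
  refine ⟨({u : GaussianInt | (u.norm : ℝ) ≤ 1}.ncard + 1) * K ^ P.card, by positivity,
    fun z hz => ?_⟩
  set s := UniqueFactorizationMonoid.normalizedFactors z with hs
  have hp2 : ∀ p ∈ s, (2 : ℝ) ≤ p.norm := by
    intro p hp
    have hirr := UniqueFactorizationMonoid.irreducible_of_normalized_factor p hp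
    have h0 : 0 < p.norm := GaussianInt.norm_pos.2 hirr.ne_zero
    have h1 : p.norm ≠ 1 := fun h =>
      hirr.not_isUnit ((Zsqrtd.norm_eq_one_iff' (by norm_num) p).1 h)
    have : 2 ≤ p.norm := by omega
    exact_mod_cast this
  have hnorm : (z.norm : ℝ) = ∏ p ∈ s.toFinset, (p.norm : ℝ) ^ s.count p := by
    have h1 := Zsqrtd.norm_eq_of_associated (by norm_num)
      (UniqueFactorizationMonoid.prod_normalizedFactors hz)
    have h2 : (s.prod).norm = (s.map fun p => p.norm).prod :=
      map_multiset_prod (Zsqrtd.normMonoidHom (d := -1)) s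
    rw [← h1, h2, Finset.prod_multiset_map_count]
    push_cast
    rfl
  -- the number of submultisets of the factorisation
  have hcount : ((Finset.Iic s).card : ℝ) ≤ K ^ P.card * (z.norm : ℝ) ^ δ := by
    rw [Multiset.card_Iic]
    push_cast
    have hle : ∀ p ∈ s.toFinset, ((s.count p : ℝ) + 1) ≤
        (if p ∈ P then K else 1) * ((p.norm : ℝ) ^ δ) ^ s.count p := by
      intro p hp
      have h2 := hp2 p (Multiset.mem_toFinset.1 hp)
      obtain ⟨ha, hb⟩ := hKQ _ (s.count p) h2
      split_ifs with h
      · exact ha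
      · rw [one_mul]
        rw [hPm, not_le] at h
        exact hb h.le
    refine (Finset.prod_le_prod (fun _ _ => by positivity) hle).trans ?_
    rw [Finset.prod_mul_distrib]
    have hA : (∏ p ∈ s.toFinset, if p ∈ P then K else 1) ≤ K ^ P.card := by
      rw [Finset.prod_ite, Finset.prod_const_one, mul_one, Finset.prod_const]
      refine pow_le_pow_right₀ hK (Finset.card_le_card fun p hp => ?_)
      exact (Finset.mem_filter.1 hp).2
    have hB : ∏ p ∈ s.toFinset, ((p.norm : ℝ) ^ δ) ^ s.count p = (z.norm : ℝ) ^ δ := by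
      rw [hnorm, ← Real.finsetProd_rpow]
      · refine Finset.prod_congr rfl fun p hp => ?_
        have h2 := hp2 p (Multiset.mem_toFinset.1 hp)
        rw [← Real.rpow_natCast, ← Real.rpow_natCast, ← Real.rpow_mul (by linarith),
          ← Real.rpow_mul (by linarith), mul_comm]
      · intro p hp
        have h2 := hp2 p (Multiset.mem_toFinset.1 hp)
        positivity
    rw [hB]
    gcongr
    exact Real.rpow_nonneg (by exact_mod_cast GaussianInt.norm_nonneg z) _
  -- a divisor is determined by its factorisation and a unit
  have hprod : CardLE ({u : GaussianInt | (u.norm : ℝ) ≤ 1} ×ˢ ((Finset.Iic s : Finset (Multiset GaussianInt)) :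
      Set (Multiset GaussianInt)))
      (({u : GaussianInt | (u.norm : ℝ) ≤ 1}.ncard + 1) * (K ^ P.card * (z.norm : ℝ) ^ δ)) := by
    refine ⟨hU.prod (Finset.finite_toSet _), ?_⟩
    rw [Set.ncard_prod, Set.ncard_coe_finset]
    push_cast
    gcongr
    linarith
  rw [mul_assoc]
  have hassoc : ∀ w : GaussianInt, w ∣ z → ∃ u : GaussianIntˣ,
      (UniqueFactorizationMonoid.normalizedFactors w).prod * u = w := fun w hw =>
    UniqueFactorizationMonoid.prod_normalizedFactors (ne_zero_of_dvd_ne_zero hz hw)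
  choose! u hu using hassoc
  refine hprod.of_injOn
    (fun w => ((u w : GaussianInt), UniqueFactorizationMonoid.normalizedFactors w)) ?_ ?_
  · intro w hw
    refine ⟨?_, ?_⟩
    · have := (Zsqrtd.norm_eq_one_iff' (by norm_num) _).2 (u w).isUnit
      simp only [Set.mem_ofPred_eq]
      rw [this]; norm_num
    · rw [Finset.mem_coe, Finset.mem_Iic]
      exact (UniqueFactorizationMonoid.dvd_iff_normalizedFactors_le_normalizedFactors
        (ne_zero_of_dvd_ne_zero hz hw) hz).1 hw
  · intro w hw w' hw' h
    simp only [Prod.mk.injEq] at h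
    rw [← hu w hw, ← hu w' hw', h.1, h.2]

/-- The number of lattice points on the circle `|x|² = R` is at most `C T ^ δ` for `R ≤ T`. -/
theorem two_squares_bound {δ : ℝ} (hδ : 0 < δ) :
    ∃ C : ℝ, 0 < C ∧ ∀ (R : ℤ) (T : ℝ), 1 ≤ T → (R : ℝ) ≤ T →
      CardLE {x : ℤ × ℤ | x.1 ^ 2 + x.2 ^ 2 = R} (C * T ^ δ) := by
  obtain ⟨C, hC, hdiv⟩ := gaussian_divisor_bound (δ := δ / 2) (by positivity)
  refine ⟨C + 1, by positivity, fun R T hT hRT => ?_⟩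
  have hTδ : 1 ≤ T ^ δ := Real.one_le_rpow hT hδ.le
  rcases le_or_gt R 0 with hR | hR
  · refine (CardLE.of_subsingleton ?_).mono subset_rfl (by nlinarith : (1 : ℝ) ≤ _)
    have h0 : ∀ x : ℤ × ℤ, x.1 ^ 2 + x.2 ^ 2 = R → x = 0 := by
      intro x hx
      have h1 : x.1 = 0 := by nlinarith [sq_nonneg x.1, sq_nonneg x.2]
      have h2 : x.2 = 0 := by nlinarith [sq_nonneg x.1, sq_nonneg x.2]
      exact Prod.ext h1 h2
    intro x hx y hy
    rw [h0 x hx, h0 y hy]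
  · have hR0 : (R : GaussianInt) ≠ 0 := by exact_mod_cast hR.ne'
    refine ((hdiv R hR0).mono subset_rfl ?_).of_injOn (fun x => (⟨x.1, x.2⟩ : GaussianInt)) ?_ ?_
    · have hRpos : (0 : ℝ) < R := by exact_mod_cast hR
      have e : (((R : GaussianInt).norm : ℤ) : ℝ) ^ (δ / 2) = (R : ℝ) ^ δ := by
        rw [Zsqrtd.norm_intCast]
        push_cast
        rw [← sq, ← Real.rpow_natCast, ← Real.rpow_mul hRpos.le]
        congr 1
        push_cast; ring
      rw [e]
      have := Real.rpow_le_rpow hRpos.le hRT hδ.le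
      nlinarith
    · intro x hx
      refine ⟨⟨x.1, -x.2⟩, ?_⟩
      have hx' : x.1 ^ 2 + x.2 ^ 2 = R := hx
      ext
      · simp; linarith
      · simp; ring
    · intro x _ y _ h
      simp only [Zsqrtd.mk.injEq] at h
      exact Prod.ext h.1 h.2

/-! ### Lattice points on arcs of circles -/

/-- If `u`, `u + 2P`, `u + 2Q` are three distinct integer points of a circle centred at the origin,
the determinant of `(P, Q)` is a nonzero integer, and Cramer's rule bounds `u` in terms of
`P` and `Q`. -/
theorem three_points_radius {u P Q : ℤ × ℤ} {N : ℝ} (hN : 1 ≤ N)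
    (hP : P ≠ 0) (hQ : Q ≠ 0) (hPQ : P ≠ Q)
    (hPu : u.1 * P.1 + u.2 * P.2 = -(P.1 ^ 2 + P.2 ^ 2))
    (hQu : u.1 * Q.1 + u.2 * Q.2 = -(Q.1 ^ 2 + Q.2 ^ 2))
    (hP1 : |(P.1 : ℝ)| ≤ 4 * N) (hP2 : |(P.2 : ℝ)| ≤ 4 * N)
    (hQ1 : |(Q.1 : ℝ)| ≤ 4 * N) (hQ2 : |(Q.2 : ℝ)| ≤ 4 * N) :
    (((u.1 ^ 2 + u.2 ^ 2 : ℤ)) : ℝ) ≤ 131072 * N ^ 6 := by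
  obtain ⟨u1, u2⟩ := u
  obtain ⟨p1, p2⟩ := P
  obtain ⟨q1, q2⟩ := Q
  simp only at *
  set D := p1 * q2 - p2 * q1 with hD
  have pos : ∀ s t : ℤ, (s, t) ≠ (0 : ℤ × ℤ) → 0 < s ^ 2 + t ^ 2 := by
    intro s t h
    rcases eq_or_ne s 0 with rfl | hs
    · have : t ≠ 0 := fun ht => h (by rw [ht]; rfl)
      positivity
    · positivity
  have hA := pos p1 p2 hP
  have hB := pos q1 q2 hQ
  set A := p1 ^ 2 + p2 ^ 2 with hAdef
  set B := q1 ^ 2 + q2 ^ 2 with hBdef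
  have e1 : D * u1 = -A * q2 + B * p2 := by
    rw [hD]; linear_combination q2 * hPu - p2 * hQu
  have e2 : D * u2 = A * q1 - B * p1 := by
    rw [hD]; linear_combination p1 * hQu - q1 * hPu
  have hD0 : D ≠ 0 := by
    intro h0
    rw [h0, zero_mul] at e1 e2
    have e3 : A * A * B = B * B * A := by
      have h1 : A * q2 = B * p2 := by linarith
      have h2 : A * q1 = B * p1 := by linarith
      calc A * A * B = (A * q1) ^ 2 + (A * q2) ^ 2 := by rw [hBdef]; ring
        _ = B * B * A := by rw [h1, h2, hAdef]; ring
    have e4 : A = B := by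
      have : A * B * (A - B) = 0 := by linarith
      rcases mul_eq_zero.1 this with h | h
      · exact absurd h (mul_pos hA hB).ne'
      · linarith
    rw [e4] at e1 e2
    have h1 : p1 = q1 := by
      apply mul_left_cancel₀ hB.ne'; linarith
    have h2 : p2 = q2 := by
      apply mul_left_cancel₀ hB.ne'; linarith
    exact hPQ (by rw [h1, h2])
  have hD1 : (1 : ℝ) ≤ |(D : ℝ)| := by exact_mod_cast Int.one_le_abs hD0
  have sqle : ∀ t : ℝ, |t| ≤ 4 * N → t ^ 2 ≤ 16 * N ^ 2 := by
    intro t ht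
    rw [← sq_abs]
    nlinarith [abs_nonneg t]
  have hAr : (A : ℝ) ≤ 32 * N ^ 2 := by
    rw [hAdef]; push_cast
    linarith [sqle _ hP1, sqle _ hP2]
  have hBr : (B : ℝ) ≤ 32 * N ^ 2 := by
    rw [hBdef]; push_cast
    linarith [sqle _ hQ1, sqle _ hQ2]
  have hA' : (0 : ℝ) ≤ A := by exact_mod_cast hA.le
  have hB' : (0 : ℝ) ≤ B := by exact_mod_cast hB.le
  have main : ∀ x s t : ℝ, |s| ≤ 4 * N → |t| ≤ 4 * N → |(D : ℝ)| * |x| ≤ A * |s| + B * |t| →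
      x ^ 2 ≤ 65536 * N ^ 6 := by
    intro x s t hs ht h
    have h1 : (A : ℝ) * |s| ≤ 32 * N ^ 2 * (4 * N) :=
      mul_le_mul hAr hs (abs_nonneg _) (by positivity)
    have h2 : (B : ℝ) * |t| ≤ 32 * N ^ 2 * (4 * N) :=
      mul_le_mul hBr ht (abs_nonneg _) (by positivity)
    have h3 : |x| ≤ |(D : ℝ)| * |x| := le_mul_of_one_le_left (abs_nonneg _) hD1
    have h4 : |x| ≤ 256 * N ^ 3 := by nlinarith
    calc x ^ 2 = |x| ^ 2 := (sq_abs x).symm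
      _ ≤ (256 * N ^ 3) ^ 2 := pow_le_pow_left₀ (abs_nonneg _) h4 2
      _ = 65536 * N ^ 6 := by ring
  have f1 := main u1 q2 p2 hQ2 hP2 (by
    rw [← abs_mul, show (D : ℝ) * u1 = -(A * q2) + B * p2 by
      have : ((D * u1 : ℤ) : ℝ) = ((-A * q2 + B * p2 : ℤ) : ℝ) := by rw [e1]
      push_cast at this; linarith]
    refine (abs_add_le _ _).trans ?_
    rw [abs_neg, abs_mul, abs_mul, abs_of_nonneg hA', abs_of_nonneg hB'])
  have f2 := main u2 q1 p1 hQ1 hP1 (by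
    rw [← abs_mul, show (D : ℝ) * u2 = A * q1 + -(B * p1) by
      have : ((D * u2 : ℤ) : ℝ) = ((A * q1 - B * p1 : ℤ) : ℝ) := by rw [e2]
      push_cast at this; linarith]
    refine (abs_add_le _ _).trans ?_
    rw [abs_neg, abs_mul, abs_mul, abs_of_nonneg hA', abs_of_nonneg hB'])
  push_cast
  linarith

/-- A circle meets a square of side `4N` in `O(N ^ θ)` lattice points, uniformly in its radius:
a circle of radius larger than a power of `N` contains at most two of them, and for smaller radii
the bound for sums of two squares applies. -/
theorem circle_bound {θ : ℝ} (hθ : 0 < θ) :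
    ∃ C : ℝ, 0 < C ∧ ∀ (a p q : ℤ × ℤ) (m : ℤ) (N : ℝ), 1 ≤ N →
      CardLE {x : ℤ × ℤ | x ∈ sqBox a (2 * N) ∧
        2 * ((x.1 - p.1) * (x.1 - q.1) + (x.2 - p.2) * (x.2 - q.2)) = m} (C * N ^ θ) := by
  obtain ⟨C, hC, hsq⟩ := two_squares_bound (δ := θ / 6) (by positivity)
  refine ⟨C * (131072 : ℝ) ^ (θ / 6) + 2, by positivity, fun a p q m N hN => ?_⟩
  set S := {x : ℤ × ℤ | x ∈ sqBox a (2 * N) ∧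
        2 * ((x.1 - p.1) * (x.1 - q.1) + (x.2 - p.2) * (x.2 - q.2)) = m} with hS
  have hNθ : 1 ≤ N ^ θ := Real.one_le_rpow hN hθ.le
  set R : ℤ := 2 * m + (p.1 - q.1) ^ 2 + (p.2 - q.2) ^ 2 with hR
  have hcirc : ∀ x ∈ S, (2 * x.1 - p.1 - q.1) ^ 2 + (2 * x.2 - p.2 - q.2) ^ 2 = R := by
    intro x hx
    rw [hR, ← hx.2]; ring
  have hfin : S.Finite := (cardLE_sqBox a hN).1.subset fun x hx => hx.1
  by_cases hbig : (R : ℝ) ≤ 131072 * N ^ 6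
  · have hN6 : 1 ≤ N ^ 6 := one_le_pow₀ hN
    refine ((hsq R (131072 * N ^ 6) (by linarith) hbig).mono subset_rfl ?_).of_injOn
      (fun x => (2 * x.1 - p.1 - q.1, 2 * x.2 - p.2 - q.2)) (fun x hx => hcirc x hx) ?_
    · have e : (131072 * N ^ 6) ^ (θ / 6) = (131072 : ℝ) ^ (θ / 6) * N ^ θ := by
        rw [Real.mul_rpow (by norm_num) (by positivity), ← Real.rpow_natCast,
          ← Real.rpow_mul (by linarith)]
        congr 2
        push_cast; ring
      rw [e]
      nlinarith
    · intro x _ y _ h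
      simp only [Prod.mk.injEq] at h
      exact Prod.ext (by linarith [h.1]) (by linarith [h.2])
  · refine ⟨hfin, ?_⟩
    have h2 : S.ncard ≤ 2 := by
      by_contra hcon
      rw [not_le, Set.ncard_eq_toFinset_card _ hfin, Finset.two_lt_card] at hcon
      obtain ⟨x, hx, y, hy, z, hz, hxy, hxz, hyz⟩ := hcon
      rw [Set.Finite.mem_toFinset] at hx hy hz
      apply hbig
      rw [← hcirc x hx]
      have hdiff : ∀ s t c : ℝ, |s - c| ≤ 2 * N → |t - c| ≤ 2 * N → |s - t| ≤ 4 * N := by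
        intro s t c h1 h2
        rw [abs_le] at *
        constructor <;> linarith [h1.1, h1.2, h2.1, h2.2]
      refine three_points_radius (u := (2 * x.1 - p.1 - q.1, 2 * x.2 - p.2 - q.2))
        (P := y - x) (Q := z - x) hN (sub_ne_zero.2 hxy.symm) (sub_ne_zero.2 hxz.symm)
        (fun h => hyz (sub_left_injective h)) ?_ ?_ ?_ ?_ ?_ ?_
      · have h1 := hcirc x hx
        have h2 := hcirc y hy
        simp only [Prod.fst_sub, Prod.snd_sub]
        linarith
      · have h1 := hcirc x hx
        have h2 := hcirc z hz
        simp only [Prod.fst_sub, Prod.snd_sub]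
        linarith
      · simp only [Prod.fst_sub]; push_cast; exact hdiff _ _ _ hy.1.1 hx.1.1
      · simp only [Prod.snd_sub]; push_cast; exact hdiff _ _ _ hy.1.2 hx.1.2
      · simp only [Prod.fst_sub]; push_cast; exact hdiff _ _ _ hz.1.1 hx.1.1
      · simp only [Prod.snd_sub]; push_cast; exact hdiff _ _ _ hz.1.2 hx.1.2
    have h2' : (S.ncard : ℝ) ≤ 2 := by exact_mod_cast h2
    have : 0 < C * (131072 : ℝ) ^ (θ / 6) := by positivity
    nlinarith

/-! ### Lattice points on lines -/

/-- The sup norm of an integer vector, as a real number. -/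
def supR (p : ℤ × ℤ) : ℝ := max |(p.1 : ℝ)| |(p.2 : ℝ)|

/-- The primitive vector in the direction of `x`. -/
def primVec (x : ℤ × ℤ) : ℤ × ℤ := (x.1 / Int.gcd x.1 x.2, x.2 / Int.gcd x.1 x.2)

theorem gcd_ne_zero_of_ne {x : ℤ × ℤ} (hx : x ≠ 0) : (Int.gcd x.1 x.2 : ℤ) ≠ 0 := by
  intro h
  have h' : Int.gcd x.1 x.2 = 0 := by exact_mod_cast h
  rw [Int.gcd_eq_zero_iff] at h'
  exact hx (Prod.ext h'.1 h'.2)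

theorem gcd_mul_primVec (x : ℤ × ℤ) :
    x.1 = Int.gcd x.1 x.2 * (primVec x).1 ∧ x.2 = Int.gcd x.1 x.2 * (primVec x).2 :=
  ⟨(Int.mul_ediv_cancel' (Int.gcd_dvd_left ..)).symm,
    (Int.mul_ediv_cancel' (Int.gcd_dvd_right ..)).symm⟩

theorem primVec_coprime {x : ℤ × ℤ} (hx : x ≠ 0) : IsCoprime (primVec x).1 (primVec x).2 := by
  rw [Int.isCoprime_iff_gcd_eq_one]
  have h : 0 < Int.gcd x.1 x.2 := Nat.pos_of_ne_zero (by exact_mod_cast gcd_ne_zero_of_ne hx)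
  exact Int.gcd_div_gcd_div_gcd h

theorem primVec_ne_zero {x : ℤ × ℤ} (hx : x ≠ 0) : primVec x ≠ 0 := by
  intro h
  have := gcd_mul_primVec x
  rw [h] at this
  simp only [Prod.fst_zero, Prod.snd_zero, mul_zero] at this
  exact hx (Prod.ext this.1 this.2)

theorem one_le_supR {p : ℤ × ℤ} (hp : p ≠ 0) : 1 ≤ supR p := by
  by_cases h : p.1 = 0
  · have h2 : p.2 ≠ 0 := fun h2 => hp (Prod.ext h h2)
    exact le_max_of_le_right (by exact_mod_cast Int.one_le_abs h2)
  · exact le_max_of_le_left (by exact_mod_cast Int.one_le_abs h)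

/-- Consecutive lattice points of the line `x · y = m / 2` differ by the rotated primitive vector of
`x`. -/
theorem line_bound {x : ℤ × ℤ} (hx : x ≠ 0) (b : ℤ × ℤ) {r : ℝ} (hr : 0 ≤ r) (m : ℤ) :
    CardLE {y : ℤ × ℤ | y ∈ sqBox b r ∧ 2 * (x.1 * y.1 + x.2 * y.2) = m}
      (2 * (r / supR (primVec x)) + 1) := by
  set p := primVec x with hp
  set S := {y : ℤ × ℤ | y ∈ sqBox b r ∧ 2 * (x.1 * y.1 + x.2 * y.2) = m}
  have hcop : IsCoprime p.1 p.2 := primVec_coprime hx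
  have hp0 : p ≠ 0 := primVec_ne_zero hx
  have hrel : ∀ y ∈ S, ∀ z ∈ S, p.1 * (y.1 - z.1) + p.2 * (y.2 - z.2) = 0 := by
    intro y hy z hz
    have h := hy.2.trans hz.2.symm
    obtain ⟨h1, h2⟩ := gcd_mul_primVec x
    apply mul_left_cancel₀ (gcd_ne_zero_of_ne hx)
    have e1 : (Int.gcd x.1 x.2 : ℤ) * p.1 = x.1 := h1.symm
    have e2 : (Int.gcd x.1 x.2 : ℤ) * p.2 = x.2 := h2.symm
    rw [mul_add, ← mul_assoc, ← mul_assoc, e1, e2]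
    linarith
  rcases le_total |(p.1 : ℝ)| |(p.2 : ℝ)| with h | h
  · have hs : supR p = |(p.2 : ℝ)| := max_eq_right h
    have hne : p.2 ≠ 0 := by
      intro h0
      have := one_le_supR hp0
      rw [hs, h0] at this
      norm_num at this
    rw [hs]
    refine (cardLE_residue (Prod.fst '' S) b.1 r hr p.2 hne ?_ ?_).of_injOn Prod.fst
      (fun y hy => ⟨y, hy, rfl⟩) ?_
    · rintro _ ⟨y, hy, rfl⟩
      exact hy.1.1
    · rintro _ ⟨y, hy, rfl⟩ _ ⟨z, hz, rfl⟩
      refine hcop.symm.dvd_of_dvd_mul_left ⟨-(y.2 - z.2), ?_⟩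
      linarith [hrel y hy z hz]
    · intro y hy z hz hyz
      have := hrel y hy z hz
      rw [show y.1 = z.1 from hyz, sub_self, mul_zero, zero_add] at this
      exact Prod.ext hyz (sub_eq_zero.1 ((mul_eq_zero.1 this).resolve_left hne))
  · have hs : supR p = |(p.1 : ℝ)| := max_eq_left h
    have hne : p.1 ≠ 0 := by
      intro h0
      have := one_le_supR hp0
      rw [hs, h0] at this
      norm_num at this
    rw [hs]
    refine (cardLE_residue (Prod.snd '' S) b.2 r hr p.1 hne ?_ ?_).of_injOn Prod.snd
      (fun y hy => ⟨y, hy, rfl⟩) ?_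
    · rintro _ ⟨y, hy, rfl⟩
      exact hy.1.2
    · rintro _ ⟨y, hy, rfl⟩ _ ⟨z, hz, rfl⟩
      refine hcop.dvd_of_dvd_mul_left ⟨-(y.1 - z.1), ?_⟩
      linarith [hrel y hy z hz]
    · intro y hy z hz hyz
      have := hrel y hy z hz
      rw [show y.2 = z.2 from hyz, sub_self, mul_zero, add_zero] at this
      exact Prod.ext (sub_eq_zero.1 ((mul_eq_zero.1 this).resolve_left hne)) hyz

theorem line_bound' {x : ℤ × ℤ} (hx : x ≠ 0) (b : ℤ × ℤ) {N : ℝ} (hN : 1 ≤ N) (m : ℤ) :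
    CardLE {y : ℤ × ℤ | y ∈ sqBox b (2 * N) ∧ 2 * (x.1 * y.1 + x.2 * y.2) = m} (5 * N) := by
  refine (line_bound hx b (r := 2 * N) (by linarith) m).mono subset_rfl ?_
  have : 2 * N / supR (primVec x) ≤ 2 * N :=
    div_le_self (by linarith) (one_le_supR (primVec_ne_zero hx))
  linarith

theorem multiples_bound {p : ℤ × ℤ} (hp : p ≠ 0) (a : ℤ × ℤ) {r : ℝ} (hr : 0 ≤ r) :
    CardLE {x : ℤ × ℤ | x ∈ sqBox a r ∧ primVec x = p} (2 * (r / supR p) + 1) := by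
  have aux : ∀ (k c : ℤ), k ≠ 0 → ∀ d : ℤ, |((d * k : ℤ) : ℝ) - c| ≤ r →
      |(d : ℝ) - c / k| ≤ r / |(k : ℝ)| := by
    intro k c hk d h
    have hk' : (k : ℝ) ≠ 0 := by exact_mod_cast hk
    rw [show (d : ℝ) - c / k = (((d * k : ℤ) : ℝ) - c) / k by push_cast; field_simp, abs_div]
    gcongr
  have hinj : Set.InjOn (fun x : ℤ × ℤ => (Int.gcd x.1 x.2 : ℤ))
      {x : ℤ × ℤ | x ∈ sqBox a r ∧ primVec x = p} := by
    intro x hx y hy hxy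
    have h1 := gcd_mul_primVec x
    have h2 := gcd_mul_primVec y
    rw [hx.2] at h1
    rw [hy.2] at h2
    simp only at hxy
    rw [hxy] at h1
    exact Prod.ext (h1.1.trans h2.1.symm) (h1.2.trans h2.2.symm)
  have hpos : 0 < supR p := lt_of_lt_of_le one_pos (one_le_supR hp)
  rcases le_total |(p.1 : ℝ)| |(p.2 : ℝ)| with h | h
  · have hs : supR p = |(p.2 : ℝ)| := max_eq_right h
    have hne : p.2 ≠ 0 := fun h0 => by simp [hs, h0] at hpos
    refine (cardLE_interval (a.2 / p.2) (r / supR p) (by positivity)).of_injOn _ ?_ hinj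
    intro x hx
    simp only [Set.mem_ofPred_eq]
    rw [hs]
    have := aux p.2 a.2 hne (Int.gcd x.1 x.2)
    rw [← hx.2, ← (gcd_mul_primVec x).2, hx.2] at this
    exact this hx.1.2
  · have hs : supR p = |(p.1 : ℝ)| := max_eq_left h
    have hne : p.1 ≠ 0 := fun h0 => by simp [hs, h0] at hpos
    refine (cardLE_interval (a.1 / p.1) (r / supR p) (by positivity)).of_injOn _ ?_ hinj
    intro x hx
    simp only [Set.mem_ofPred_eq]
    rw [hs]
    have := aux p.1 a.1 hne (Int.gcd x.1 x.2)
    rw [← hx.2, ← (gcd_mul_primVec x).1, hx.2] at this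
    exact this hx.1.1

theorem sum_inv_le (K : ℕ) :
    ∑ k ∈ Finset.Icc (-(K : ℤ)) K, 1 / max 1 |(k : ℝ)| ≤ 1 + 2 * (harmonic K : ℝ) := by
  have heven : Function.Even fun k : ℤ => 1 / max 1 |(k : ℝ)| := by
    intro k; simp
  rw [Finset.sum_Icc_of_even_eq_range heven]
  have : ∑ m ∈ Finset.range (K + 1), 1 / max 1 |((m : ℤ) : ℝ)| = 1 + (harmonic K : ℝ) := by
    induction K with
    | zero => simp
    | succ K ih =>
      rw [Finset.sum_range_succ, ih, harmonic_succ]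
      push_cast
      have h1 : (0 : ℝ) ≤ K := Nat.cast_nonneg K
      rw [abs_of_nonneg (by linarith), max_eq_right (by linarith), one_div, add_assoc]
  rw [this]
  simp only [nsmul_eq_mul]
  norm_num
  linarith

theorem sum_inv_supR_sq {θ : ℝ} (hθ : 0 < θ) :
    ∃ C : ℝ, 0 < C ∧ ∀ (A : ℝ) (P : Finset (ℤ × ℤ)), 1 ≤ A → (∀ p ∈ P, p ≠ 0 ∧ supR p ≤ A) →
      ∑ p ∈ P, 1 / supR p ^ 2 ≤ C * A ^ θ := by
  refine ⟨(3 + 4 / θ) ^ 2, by positivity, fun A P hA hP => ?_⟩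
  set K := ⌊A⌋₊ with hK
  set I := Finset.Icc (-(K : ℤ)) K with hI
  have hKA : (K : ℝ) ≤ A := Nat.floor_le (by linarith)
  have hK1 : 1 ≤ K := Nat.le_floor (by exact_mod_cast hA)
  have hmem : ∀ t : ℤ, |(t : ℝ)| ≤ A → t ∈ I := by
    intro t ht
    have h1 : t.natAbs ≤ K := Nat.le_floor (by rwa [Nat.cast_natAbs, Int.cast_abs])
    rw [hI, Finset.mem_Icc]
    omega
  have hsub : P ⊆ I ×ˢ I := by
    intro p hp
    have := (hP p hp).2
    rw [Finset.mem_product]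
    exact ⟨hmem _ ((le_max_left _ _).trans this), hmem _ ((le_max_right _ _).trans this)⟩
  have hlog : (harmonic K : ℝ) ≤ 1 + A ^ (θ / 2) / (θ / 2) := by
    refine (harmonic_le_one_add_log K).trans ?_
    have h1 : Real.log K ≤ Real.log A :=
      Real.log_le_log (by exact_mod_cast hK1) hKA
    linarith [Real.log_le_rpow_div (x := A) (by linarith) (half_pos hθ)]
  have hAθ : 1 ≤ A ^ (θ / 2) := Real.one_le_rpow hA (by positivity)
  calc ∑ p ∈ P, 1 / supR p ^ 2
      ≤ ∑ p ∈ P, 1 / max 1 |(p.1 : ℝ)| * (1 / max 1 |(p.2 : ℝ)|) := by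
        refine Finset.sum_le_sum fun p hp => ?_
        have h1 := one_le_supR (hP p hp).1
        rw [div_mul_div_comm, one_mul, sq]
        refine one_div_le_one_div_of_le (by positivity) ?_
        exact mul_le_mul (max_le h1 (le_max_left _ _)) (max_le h1 (le_max_right _ _))
          (by positivity) (by linarith)
    _ ≤ ∑ p ∈ I ×ˢ I, 1 / max 1 |(p.1 : ℝ)| * (1 / max 1 |(p.2 : ℝ)|) :=
        Finset.sum_le_sum_of_subset_of_nonneg hsub fun _ _ _ => by positivity
    _ = (∑ k ∈ I, 1 / max 1 |(k : ℝ)|) ^ 2 := by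
        rw [sq, Finset.sum_mul_sum, Finset.sum_product]
    _ ≤ ((3 + 4 / θ) * A ^ (θ / 2)) ^ 2 := by
        refine pow_le_pow_left₀ (Finset.sum_nonneg fun _ _ => by positivity) ?_ 2
        refine (sum_inv_le K).trans ?_
        have : A ^ (θ / 2) / (θ / 2) * 2 = 4 / θ * A ^ (θ / 2) := by field_simp; ring
        nlinarith
    _ = (3 + 4 / θ) ^ 2 * A ^ θ := by
        rw [mul_pow, ← Real.rpow_natCast (A ^ (θ / 2)), ← Real.rpow_mul (by linarith)]
        congr 2
        push_cast; ring

/-- Vectors whose primitive part is longer than `A` contribute at most `1 / A` each; the others are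
grouped by their primitive part `p`, of which the square contains `O(A / |p|)` multiples. -/
theorem sum_inv_primVec {θ : ℝ} (hθ : 0 < θ) :
    ∃ C : ℝ, 0 < C ∧ ∀ (a : ℤ × ℤ) (A : ℝ) (F : Finset (ℤ × ℤ)), 1 ≤ A →
      (∀ x ∈ F, x ≠ 0 ∧ x ∈ sqBox a (2 * A)) →
      ∑ x ∈ F, 1 / supR (primVec x) ≤ C * A * A ^ θ := by
  classical
  obtain ⟨C, hC, hsum⟩ := sum_inv_supR_sq hθ
  refine ⟨25 + 5 * C, by positivity, fun a A F hA hF => ?_⟩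
  have hA0 : 0 < A := by linarith
  have hAθ : 1 ≤ A ^ θ := Real.one_le_rpow hA hθ.le
  have hsup : ∀ x ∈ F, 1 ≤ supR (primVec x) := fun x hx =>
    one_le_supR (primVec_ne_zero (hF x hx).1)
  rw [← Finset.sum_filter_add_sum_filter_not F fun x => supR (primVec x) ≤ A]
  have hbig : ∑ x ∈ F with ¬ supR (primVec x) ≤ A, 1 / supR (primVec x) ≤ 25 * A := by
    have hcard : ((F.filter fun x => ¬ supR (primVec x) ≤ A).card : ℝ) ≤ 25 * A ^ 2 := by
      have := (cardLE_sqBox a hA).mono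
        (s := ((F.filter fun x => ¬ supR (primVec x) ≤ A : Finset (ℤ × ℤ)) : Set (ℤ × ℤ)))
        (fun x hx => (hF x (Finset.mem_filter.1 hx).1).2) le_rfl
      have h2 := this.2
      rwa [Set.ncard_coe_finset] at h2
    calc ∑ x ∈ F with ¬ supR (primVec x) ≤ A, 1 / supR (primVec x)
        ≤ ∑ x ∈ F with ¬ supR (primVec x) ≤ A, 1 / A := by
          refine Finset.sum_le_sum fun x hx => ?_
          exact one_div_le_one_div_of_le hA0 (not_le.1 (Finset.mem_filter.1 hx).2).le
      _ ≤ 25 * A ^ 2 * (1 / A) := by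
          rw [Finset.sum_const, nsmul_eq_mul]
          gcongr
      _ = 25 * A := by field_simp
  have hsmall : ∑ x ∈ F with supR (primVec x) ≤ A, 1 / supR (primVec x) ≤
      5 * A * (C * A ^ θ) := by
    set G := F.filter fun x => supR (primVec x) ≤ A with hG
    have hGF : ∀ x ∈ G, x ∈ F ∧ supR (primVec x) ≤ A := fun x hx => Finset.mem_filter.1 hx
    set P := G.image primVec with hPdef
    have hP : ∀ p ∈ P, p ≠ 0 ∧ supR p ≤ A := by
      intro p hp
      obtain ⟨x, hx, rfl⟩ := Finset.mem_image.1 hp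
      exact ⟨primVec_ne_zero (hF x (hGF x hx).1).1, (hGF x hx).2⟩
    rw [← Finset.sum_fiberwise_of_maps_to (t := P) (g := primVec)
      fun x hx => Finset.mem_image_of_mem _ hx]
    calc ∑ p ∈ P, ∑ x ∈ G with primVec x = p, 1 / supR (primVec x)
        ≤ ∑ p ∈ P, 5 * A * (1 / supR p ^ 2) := by
          refine Finset.sum_le_sum fun p hp => ?_
          obtain ⟨hp0, hpA⟩ := hP p hp
          have h1 := one_le_supR hp0
          have hcard : ((G.filter fun x => primVec x = p).card : ℝ) ≤ 5 * A / supR p := by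
            have := (multiples_bound hp0 a (r := 2 * A) (by linarith)).mono
              (s := ((G.filter fun x => primVec x = p : Finset (ℤ × ℤ)) : Set (ℤ × ℤ)))
              (fun x hx => ⟨(hF x (hGF x (Finset.mem_filter.1 hx).1).1).2,
                (Finset.mem_filter.1 hx).2⟩) le_rfl
            have h2 := this.2
            rw [Set.ncard_coe_finset] at h2
            refine h2.trans ?_
            rw [le_div_iff₀ (by linarith)]
            have : 2 * A / supR p * supR p = 2 * A := div_mul_cancel₀ _ (by linarith)
            nlinarith
          calc ∑ x ∈ G with primVec x = p, 1 / supR (primVec x)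
              = ∑ x ∈ G with primVec x = p, 1 / supR p :=
                Finset.sum_congr rfl fun x hx => by rw [(Finset.mem_filter.1 hx).2]
            _ ≤ 5 * A / supR p * (1 / supR p) := by
                rw [Finset.sum_const, nsmul_eq_mul]
                gcongr
            _ = 5 * A * (1 / supR p ^ 2) := by field_simp
      _ ≤ 5 * A * (C * A ^ θ) := by
          rw [← Finset.mul_sum]
          gcongr
          exact hsum A P hA hP
  have : 25 * A ≤ 25 * A * A ^ θ := le_mul_of_one_le_right (by linarith) hAθ
  calc _ ≤ 5 * A * (C * A ^ θ) + 25 * A := add_le_add hsmall hbig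
    _ ≤ 5 * A * (C * A ^ θ) + 25 * A * A ^ θ := by linarith
    _ = (25 + 5 * C) * A * A ^ θ := by ring

/-- Pairs `(x, y)` with `2 x · y = m`, where `x ≠ 0` lies in a square of size `A` and `y` in a
square of size `B` which may depend on `x`: there are `O(A max(A, B) ^ (1 + θ))` of them. -/
theorem line_pairs_bound {θ : ℝ} (hθ : 0 < θ) :
    ∃ C : ℝ, 0 < C ∧ ∀ (a : ℤ × ℤ) (b : ℤ × ℤ → ℤ × ℤ) (m : ℤ) (A B X : ℝ), 1 ≤ A → A ≤ X →
      1 ≤ B → B ≤ X →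
      CardLE {q : (ℤ × ℤ) × (ℤ × ℤ) | (q.1 ∈ sqBox a (2 * A) ∧ q.1 ≠ 0) ∧
        q.2 ∈ sqBox (b q.1) (2 * B) ∧ 2 * (q.1.1 * q.2.1 + q.1.2 * q.2.2) = m}
        (C * A * X ^ (1 + θ)) := by
  classical
  obtain ⟨C, hC, hsum⟩ := sum_inv_primVec hθ
  refine ⟨25 + 4 * C, by positivity, fun a b m A B X hA hAX hB hBX => ?_⟩
  have hfin : {x : ℤ × ℤ | x ∈ sqBox a (2 * A) ∧ x ≠ 0}.Finite :=
    (cardLE_sqBox a hA).1.subset fun x hx => hx.1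
  set F := hfin.toFinset with hF
  have hFm : ∀ x, x ∈ F ↔ x ∈ sqBox a (2 * A) ∧ x ≠ 0 := fun x => by simp [hF]
  refine (CardLE.of_fibers F (fun x => 4 * B * (1 / supR (primVec x)) + 1)
    (fun q hq => (hFm _).2 hq.1) ?_).mono subset_rfl ?_
  · intro x hx
    rw [hFm] at hx
    refine (line_bound hx.2 (b x) (r := 2 * B) (by linarith) m).mono (fun y hy => hy.2) ?_
    apply le_of_eq; ring
  · have hX : 0 < X := by linarith
    have hcard : (F.card : ℝ) ≤ 25 * A ^ 2 := by
      have := (cardLE_sqBox a hA).mono (s := (F : Set (ℤ × ℤ)))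
        (fun x hx => ((hFm x).1 hx).1) le_rfl
      have h2 := this.2
      rwa [Set.ncard_coe_finset] at h2
    have h1 := hsum a A F hA fun x hx => ⟨((hFm x).1 hx).2, ((hFm x).1 hx).1⟩
    have hAθ : A ^ θ ≤ X ^ θ := Real.rpow_le_rpow (by linarith) hAX hθ.le
    have hXθ : 1 ≤ X ^ θ := Real.one_le_rpow (by linarith) hθ.le
    rw [Finset.sum_add_distrib, ← Finset.mul_sum, Finset.sum_const, nsmul_eq_mul, mul_one,
      Real.rpow_add hX, Real.rpow_one]
    have h2 : 4 * B * ∑ x ∈ F, 1 / supR (primVec x) ≤ 4 * X * (C * A * X ^ θ) := by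
      gcongr
      · exact Finset.sum_nonneg fun x _ =>
          one_div_nonneg.2 ((abs_nonneg _).trans (le_max_left _ _))
      · exact h1.trans (by gcongr)
    have h3 : 25 * A ^ 2 ≤ 25 * A * (X * X ^ θ) := by
      rw [sq, ← mul_assoc]
      gcongr
      exact hAX.trans (le_mul_of_one_le_right hX.le hXθ)
    calc _ ≤ 4 * X * (C * A * X ^ θ) + 25 * A * (X * X ^ θ) := add_le_add h2 (hcard.trans h3)
      _ = _ := by ring

/-! ### Counting in the support of the tensors -/

/-- The constraints cutting out the support of `hTensor`, with Euclidean annuli enlarged to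
squares. -/
structure InSupp (a₁ a₂ a₃ : ℤ × ℤ) (N₁ N₂ N₃ : ℝ) (n n₁ n₂ n₃ : ℤ × ℤ) : Prop where
  sum_eq : n = n₁ - n₂ + n₃
  ne₁ : n₂ ≠ n₁
  ne₃ : n₂ ≠ n₃
  mem₁ : n₁ ∈ sqBox a₁ (2 * N₁)
  mem₂ : n₂ ∈ sqBox a₂ (2 * N₂)
  mem₃ : n₃ ∈ sqBox a₃ (2 * N₃)

section support

variable {a₁ a₂ a₃ : ℤ × ℤ} {N₁ N₂ N₃ : ℝ} {m : ℤ} {n n₁ n₂ n₃ : ℤ × ℤ}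

theorem inSupp_of_hTensor (h : hTensor a₁ a₂ a₃ N₁ N₂ N₃ n n₁ n₂ n₃ ≠ 0) :
    InSupp a₁ a₂ a₃ N₁ N₂ N₃ n n₁ n₂ n₃ := by
  unfold hTensor at h
  split_ifs at h with hc
  · obtain ⟨h1, h2, h3, -, h4, -, h5, -, h6⟩ := hc
    exact ⟨h1, h2, h3, mem_sqBox_of_jbZ h4, mem_sqBox_of_jbZ h5, mem_sqBox_of_jbZ h6⟩
  · exact absurd rfl h

theorem inSupp_of_hTensorK (h : hTensorK a₁ a₂ a₃ N₁ N₂ N₃ m n n₁ n₂ n₃ ≠ 0) :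
    InSupp a₁ a₂ a₃ N₁ N₂ N₃ n n₁ n₂ n₃ ∧ kappa n n₁ n₂ n₃ = m := by
  unfold hTensorK at h
  split_ifs at h with hc
  · exact ⟨inSupp_of_hTensor h, hc⟩
  · exact absurd rfl h

theorem norm_hTensor_le : ‖hTensor a₁ a₂ a₃ N₁ N₂ N₃ n n₁ n₂ n₃‖ ≤ 1 := by
  unfold hTensor; split_ifs <;> simp

theorem norm_hTensorK_le : ‖hTensorK a₁ a₂ a₃ N₁ N₂ N₃ m n n₁ n₂ n₃‖ ≤ 1 := by
  unfold hTensorK; split_ifs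
  · exact norm_hTensor_le
  · simp

theorem InSupp.fst (h : InSupp a₁ a₂ a₃ N₁ N₂ N₃ n n₁ n₂ n₃) : n.1 = n₁.1 - n₂.1 + n₃.1 := by
  rw [h.sum_eq]; rfl

theorem InSupp.snd (h : InSupp a₁ a₂ a₃ N₁ N₂ N₃ n n₁ n₂ n₃) : n.2 = n₁.2 - n₂.2 + n₃.2 := by
  rw [h.sum_eq]; rfl

/-- On the hyperplane `n = n₁ - n₂ + n₃` the phase factorises as `2 (n₂ - n₁) · (n₂ - n₃)`. -/
theorem InSupp.kappa_eq (h : InSupp a₁ a₂ a₃ N₁ N₂ N₃ n n₁ n₂ n₃) :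
    kappa n n₁ n₂ n₃ =
      2 * ((n₂.1 - n₁.1) * (n₂.1 - n₃.1) + (n₂.2 - n₁.2) * (n₂.2 - n₃.2)) := by
  rw [kappa, jbSqInt, jbSqInt, jbSqInt, jbSqInt, h.fst, h.snd]; ring

theorem InSupp.cardLE_n : CardLE {k | InSupp a₁ a₂ a₃ N₁ N₂ N₃ k n₁ n₂ n₃} 1 :=
  CardLE.of_subsingleton fun _ hk _ hl => hk.sum_eq.trans hl.sum_eq.symm

theorem InSupp.cardLE_n1 : CardLE {k | InSupp a₁ a₂ a₃ N₁ N₂ N₃ n k n₂ n₃} 1 :=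
  CardLE.of_subsingleton fun k hk l hl => by
    have h1 := hk.fst
    have h2 := hk.snd
    rw [hl.fst] at h1
    rw [hl.snd] at h2
    exact Prod.ext (by omega) (by omega)

end support

/-- The bound without restriction on the phase only uses that two frequencies, in squares of size
`N₂` and `N₃`, determine the remaining one. -/
theorem tNorm1_hTensor_le (a₁ a₂ a₃ : ℤ × ℤ) {N₁ N₂ N₃ : ℝ} (hN₂ : 1 ≤ N₂) (hN₃ : 1 ≤ N₃) :
    tNorm1 (hTensor a₁ a₂ a₃ N₁ N₂ N₃) ≤ ENNReal.ofReal (25 * N₂ * N₃) := by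
  have hD : 0 ≤ 25 * N₂ * N₃ := by positivity
  have h2 := cardLE_sqBox a₂ hN₂
  have h3 := cardLE_sqBox a₃ hN₃
  have h23 : CardLE (sqBox a₂ (2 * N₂) ×ˢ sqBox a₃ (2 * N₃)) (25 * N₂ ^ 2 * (25 * N₃ ^ 2)) :=
    h2.prod_fibers (by positivity) (fun q hq => hq.1)
      fun x _ => h3.mono (fun y hy => hy.2) le_rfl
  refine max_le (max_le ?_ ?_) (max_le ?_ ?_)
  · refine schur_test (fun n (q : (ℤ × ℤ) × (ℤ × ℤ) × (ℤ × ℤ)) =>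
      hTensor a₁ a₂ a₃ N₁ N₂ N₃ n q.1 q.2.1 q.2.2) (R₁ := 1)
      (R₂ := 25 * N₂ ^ 2 * (25 * N₃ ^ 2)) (fun _ _ => norm_hTensor_le)
      (fun q => InSupp.cardLE_n.mono (fun n hn => inSupp_of_hTensor hn) le_rfl)
      (fun n => h23.of_injOn (fun q => (q.2.1, q.2.2)) ?_ ?_) hD (by apply le_of_eq; ring)
    · intro q hq
      have := inSupp_of_hTensor hq
      exact ⟨this.mem₂, this.mem₃⟩
    · rintro ⟨p₁, p₂, p₃⟩ hp ⟨q₁, q₂, q₃⟩ hq h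
      have hp' := inSupp_of_hTensor hp
      have hq' := inSupp_of_hTensor hq
      have := hp'.fst; have := hp'.snd; have := hq'.fst; have := hq'.snd
      simp only [Prod.ext_iff] at *
      omega
  · refine schur_test (fun n₁ (q : (ℤ × ℤ) × (ℤ × ℤ) × (ℤ × ℤ)) =>
      hTensor a₁ a₂ a₃ N₁ N₂ N₃ q.1 n₁ q.2.1 q.2.2) (R₁ := 1)
      (R₂ := 25 * N₂ ^ 2 * (25 * N₃ ^ 2)) (fun _ _ => norm_hTensor_le)
      (fun q => InSupp.cardLE_n1.mono (fun n hn => inSupp_of_hTensor hn) le_rfl)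
      (fun n => h23.of_injOn (fun q => (q.2.1, q.2.2)) ?_ ?_) hD (by apply le_of_eq; ring)
    · intro q hq
      have := inSupp_of_hTensor hq
      exact ⟨this.mem₂, this.mem₃⟩
    · rintro ⟨p₁, p₂, p₃⟩ hp ⟨q₁, q₂, q₃⟩ hq h
      have hp' := inSupp_of_hTensor hp
      have hq' := inSupp_of_hTensor hq
      have := hp'.fst; have := hp'.snd; have := hq'.fst; have := hq'.snd
      simp only [Prod.ext_iff] at *
      omega
  · refine schur_test (fun (p : (ℤ × ℤ) × (ℤ × ℤ)) (q : (ℤ × ℤ) × (ℤ × ℤ)) =>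
      hTensor a₁ a₂ a₃ N₁ N₂ N₃ p.1 q.1 p.2 q.2) (R₁ := 25 * N₂ ^ 2) (R₂ := 25 * N₃ ^ 2)
      (fun _ _ => norm_hTensor_le)
      (fun q => h2.of_injOn Prod.snd (fun p hp => (inSupp_of_hTensor hp).mem₂) ?_)
      (fun p => h3.of_injOn Prod.snd (fun q hq => (inSupp_of_hTensor hq).mem₃) ?_)
      hD (by apply le_of_eq; ring)
    all_goals
      rintro ⟨p₁, p₂⟩ hp ⟨q₁, q₂⟩ hq h
      have hp' := inSupp_of_hTensor hp
      have hq' := inSupp_of_hTensor hq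
      have := hp'.fst; have := hp'.snd; have := hq'.fst; have := hq'.snd
      simp only [Prod.ext_iff] at *
      omega
  · refine schur_test (fun (p : (ℤ × ℤ) × (ℤ × ℤ)) (q : (ℤ × ℤ) × (ℤ × ℤ)) =>
      hTensor a₁ a₂ a₃ N₁ N₂ N₃ p.1 q.1 q.2 p.2) (R₁ := 25 * N₃ ^ 2) (R₂ := 25 * N₂ ^ 2)
      (fun _ _ => norm_hTensor_le)
      (fun q => h3.of_injOn Prod.snd (fun p hp => (inSupp_of_hTensor hp).mem₃) ?_)
      (fun p => h2.of_injOn Prod.snd (fun q hq => (inSupp_of_hTensor hq).mem₂) ?_)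
      hD (by apply le_of_eq; ring)
    all_goals
      rintro ⟨p₁, p₂⟩ hp ⟨q₁, q₂⟩ hq h
      have hp' := inSupp_of_hTensor hp
      have hq' := inSupp_of_hTensor hq
      have := hp'.fst; have := hp'.snd; have := hq'.fst; have := hq'.snd
      simp only [Prod.ext_iff] at *
      omega

/-- The bound on a level set of the phase. -/
theorem tNorm1_hTensorK_le {θ : ℝ} (hθ : 0 < θ) :
    ∃ C : ℝ, 0 < C ∧ ∀ (a₁ a₂ a₃ : ℤ × ℤ) (N₁ N₂ N₃ : ℝ), 1 ≤ N₁ → 1 ≤ N₂ → 1 ≤ N₃ → ∀ m : ℤ,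
      tNorm1 (hTensorK a₁ a₂ a₃ N₁ N₂ N₃ m) ≤ ENNReal.ofReal
        (C * max N₁ (max N₂ N₃) ^ ((1 : ℝ) / 2 + θ) * min N₂ N₃ ^ ((1 : ℝ) / 2)) := by
  obtain ⟨E, hE, circle⟩ := circle_bound hθ
  obtain ⟨L, hL, line⟩ := line_pairs_bound hθ
  set C := 25 * E + L + 25 with hCdef
  have hC1 : 1 ≤ C := by linarith
  refine ⟨C, by positivity, fun a₁ a₂ a₃ N₁ N₂ N₃ hN₁ hN₂ hN₃ m => ?_⟩
  set X := max N₁ (max N₂ N₃) with hX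
  set μ := min N₂ N₃ with hμ
  have hX₁ : N₁ ≤ X := le_max_left _ _
  have hX₂ : N₂ ≤ X := (le_max_left _ _).trans (le_max_right _ _)
  have hX₃ : N₃ ≤ X := (le_max_right _ _).trans (le_max_right _ _)
  have hX1 : 1 ≤ X := hN₁.trans hX₁
  have hX0 : 0 < X := by linarith
  have hμ1 : 1 ≤ μ := le_min hN₂ hN₃
  have hXθ : 1 ≤ X ^ θ := Real.one_le_rpow hX1 hθ.le
  set D := C * X ^ ((1 : ℝ) / 2 + θ) * μ ^ ((1 : ℝ) / 2) with hDdef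
  have hD : 0 ≤ D := by positivity
  have hD2 : D ^ 2 = C ^ 2 * (X * (X ^ θ * X ^ θ) * μ) := by
    have e1 : (X ^ ((1 : ℝ) / 2 + θ)) ^ 2 = X * (X ^ θ * X ^ θ) := by
      rw [sq, ← Real.rpow_add hX0, ← Real.rpow_add hX0]
      nth_rewrite 2 [← Real.rpow_one X]
      rw [← Real.rpow_add hX0]
      congr 1; ring
    have e2 : (μ ^ ((1 : ℝ) / 2)) ^ 2 = μ := by
      rw [← Real.sqrt_eq_rpow, Real.sq_sqrt (by linarith)]
    rw [hDdef, mul_pow, mul_pow, e1, e2]; ring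
  have powle : ∀ N, 1 ≤ N → N ≤ X → N ^ θ ≤ X ^ θ := fun N h1 h2 =>
    Real.rpow_le_rpow (by linarith) h2 hθ.le
  set R := C * (X * X ^ θ * μ) with hRdef
  have hRD : 1 * R ≤ D ^ 2 := by
    rw [one_mul, hD2, hRdef]
    have h1 : X ^ θ ≤ X ^ θ * X ^ θ := le_mul_of_one_le_left (by positivity) hXθ
    have h2 : C ≤ C ^ 2 := by nlinarith
    gcongr
  have hlineR : ∀ N, N = μ → L * N * X ^ (1 + θ) ≤ R := by
    rintro N rfl
    rw [Real.rpow_add hX0, Real.rpow_one, hRdef]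
    calc L * μ * (X * X ^ θ) = L * (X * X ^ θ * μ) := by ring
      _ ≤ _ := by gcongr; linarith
  have hcircR : ∀ N N', N = μ → N ≤ X → 1 ≤ N' → N' ≤ X →
      25 * N ^ 2 * (E * N' ^ θ) ≤ R := by
    rintro N N' rfl h1 h2 h3
    have h4 := powle N' h2 h3
    calc 25 * μ ^ 2 * (E * N' ^ θ) ≤ 25 * (X * μ) * (E * X ^ θ) := by
          rw [sq]; gcongr
      _ = 25 * E * (X * X ^ θ * μ) := by ring
      _ ≤ R := by rw [hRdef]; gcongr; linarith
  have hsupp : ∀ {n n₁ n₂ n₃}, hTensorK a₁ a₂ a₃ N₁ N₂ N₃ m n n₁ n₂ n₃ ≠ 0 →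
      InSupp a₁ a₂ a₃ N₁ N₂ N₃ n n₁ n₂ n₃ ∧
        2 * ((n₂.1 - n₁.1) * (n₂.1 - n₃.1) + (n₂.2 - n₁.2) * (n₂.2 - n₃.2)) = m := by
    intro n n₁ n₂ n₃ h
    obtain ⟨h1, h2⟩ := inSupp_of_hTensorK h
    exact ⟨h1, h1.kappa_eq.symm.trans h2⟩
  refine max_le (max_le ?_ ?_) (max_le ?_ ?_)
  · refine schur_test (fun n (q : (ℤ × ℤ) × (ℤ × ℤ) × (ℤ × ℤ)) =>
      hTensorK a₁ a₂ a₃ N₁ N₂ N₃ m n q.1 q.2.1 q.2.2) (R₁ := 1) (R₂ := R)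
      (fun _ _ => norm_hTensorK_le)
      (fun q => InSupp.cardLE_n.mono (fun n hn => (hsupp hn).1) le_rfl)
      (fun n => ?_) hD hRD
    rcases le_total N₃ N₂ with h32 | h23
    · -- the phase is `2 (n - n₃) · (n - n₁)`
      refine ((line (n - a₃) (fun _ => n - a₁) m N₃ N₁ X hN₃ hX₃ hN₁ hX₁).mono subset_rfl
        (hlineR _ (min_eq_right h32).symm)).of_injOn (fun q => (n - q.2.2, n - q.1)) ?_ ?_
      · rintro ⟨p₁, p₂, p₃⟩ hp
        obtain ⟨hs, hk⟩ := hsupp hp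
        refine ⟨⟨sqBox_sub_mem hs.mem₃, ?_⟩, sqBox_sub_mem hs.mem₁, ?_⟩
        · intro h0
          have h1 : n = p₃ := sub_eq_zero.1 h0
          refine hs.ne₁ (Prod.ext ?_ ?_)
          · have := hs.fst; rw [h1] at this; linarith
          · have := hs.snd; rw [h1] at this; linarith
        · simp only [Prod.fst_sub, Prod.snd_sub]
          rw [hs.fst, hs.snd, ← hk]; ring
      · rintro ⟨p₁, p₂, p₃⟩ hp ⟨q₁, q₂, q₃⟩ hq h
        have hp' := (hsupp hp).1
        have hq' := (hsupp hq).1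
        have := hp'.fst; have := hp'.snd; have := hq'.fst; have := hq'.snd
        simp only [Prod.ext_iff, Prod.fst_sub, Prod.snd_sub] at *
        omega
    · -- for fixed `n` and `n₂`, the frequency `n₁` lies on a circle with diameter `[n, n₂]`
      refine ((CardLE.prod_fibers (s := {q : (ℤ × ℤ) × (ℤ × ℤ) | q.1 ∈ sqBox a₂ (2 * N₂) ∧
        q.2 ∈ sqBox a₁ (2 * N₁) ∧ 2 * ((q.2.1 - n.1) * (q.2.1 - q.1.1) +
          (q.2.2 - n.2) * (q.2.2 - q.1.2)) = -m}) (cardLE_sqBox a₂ hN₂) (B := E * N₁ ^ θ)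
        (by positivity) (fun q hq => hq.1) (fun x _ => (circle a₁ n x (-m) N₁ hN₁).mono
          (fun y hy => hy.2) le_rfl)).mono subset_rfl
        (hcircR _ _ (min_eq_left h23).symm hX₂ hN₁ hX₁)).of_injOn (fun q => (q.2.1, q.1)) ?_ ?_
      · rintro ⟨p₁, p₂, p₃⟩ hp
        obtain ⟨hs, hk⟩ := hsupp hp
        refine ⟨hs.mem₂, hs.mem₁, ?_⟩
        rw [hs.fst, hs.snd, ← hk]; ring
      · rintro ⟨p₁, p₂, p₃⟩ hp ⟨q₁, q₂, q₃⟩ hq h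
        have hp' := (hsupp hp).1
        have hq' := (hsupp hq).1
        have := hp'.fst; have := hp'.snd; have := hq'.fst; have := hq'.snd
        simp only [Prod.ext_iff] at *
        omega
  · refine schur_test (fun n₁ (q : (ℤ × ℤ) × (ℤ × ℤ) × (ℤ × ℤ)) =>
      hTensorK a₁ a₂ a₃ N₁ N₂ N₃ m q.1 n₁ q.2.1 q.2.2) (R₁ := 1) (R₂ := R)
      (fun _ _ => norm_hTensorK_le)
      (fun q => InSupp.cardLE_n1.mono (fun n hn => (hsupp hn).1) le_rfl)
      (fun n₁ => ?_) hD hRD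
    rcases le_total N₂ N₃ with h23 | h32
    · refine ((line (a₂ - n₁) (fun x => x + n₁ - a₃) m N₂ N₃ X hN₂ hX₂ hN₃ hX₃).mono subset_rfl
        (hlineR _ (min_eq_left h23).symm)).of_injOn
        (fun q => (q.2.1 - n₁, q.2.1 - q.2.2)) ?_ ?_
      · rintro ⟨p₀, p₂, p₃⟩ hp
        obtain ⟨hs, hk⟩ := hsupp hp
        refine ⟨⟨sqBox_mem_sub hs.mem₂, sub_ne_zero.2 hs.ne₁⟩, ?_, ?_⟩
        · simp only [sub_add_cancel]
          exact sqBox_sub_mem hs.mem₃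
        · simp only [Prod.fst_sub, Prod.snd_sub]
          exact hk
      · rintro ⟨p₀, p₂, p₃⟩ hp ⟨q₀, q₂, q₃⟩ hq h
        have hp' := (hsupp hp).1
        have hq' := (hsupp hq).1
        have := hp'.fst; have := hp'.snd; have := hq'.fst; have := hq'.snd
        simp only [Prod.ext_iff, Prod.fst_sub, Prod.snd_sub] at *
        omega
    · -- for fixed `n₁` and `n₃`, the frequency `n₂` lies on a circle with diameter `[n₁, n₃]`
      refine ((CardLE.prod_fibers (s := {q : (ℤ × ℤ) × (ℤ × ℤ) | q.1 ∈ sqBox a₃ (2 * N₃) ∧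
        q.2 ∈ sqBox a₂ (2 * N₂) ∧ 2 * ((q.2.1 - n₁.1) * (q.2.1 - q.1.1) +
          (q.2.2 - n₁.2) * (q.2.2 - q.1.2)) = m}) (cardLE_sqBox a₃ hN₃) (B := E * N₂ ^ θ)
        (by positivity) (fun q hq => hq.1) (fun x _ => (circle a₂ n₁ x m N₂ hN₂).mono
          (fun y hy => hy.2) le_rfl)).mono subset_rfl
        (hcircR _ _ (min_eq_right h32).symm hX₃ hN₂ hX₂)).of_injOn
        (fun q => (q.2.2, q.2.1)) ?_ ?_
      · rintro ⟨p₀, p₂, p₃⟩ hp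
        obtain ⟨hs, hk⟩ := hsupp hp
        exact ⟨hs.mem₃, hs.mem₂, hk⟩
      · rintro ⟨p₀, p₂, p₃⟩ hp ⟨q₀, q₂, q₃⟩ hq h
        have hp' := (hsupp hp).1
        have hq' := (hsupp hq).1
        have := hp'.fst; have := hp'.snd; have := hq'.fst; have := hq'.snd
        simp only [Prod.ext_iff] at *
        omega
  · -- both the row and the column sums are counted on a circle
    refine schur_test (fun (p : (ℤ × ℤ) × (ℤ × ℤ)) (q : (ℤ × ℤ) × (ℤ × ℤ)) =>
      hTensorK a₁ a₂ a₃ N₁ N₂ N₃ m p.1 q.1 p.2 q.2) (R₁ := E * N₂ ^ θ) (R₂ := E * N₁ ^ θ)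
      (fun _ _ => norm_hTensorK_le)
      (fun q => (circle a₂ q.1 q.2 m N₂ hN₂).of_injOn Prod.snd
        (fun p hp => ⟨(hsupp hp).1.mem₂, (hsupp hp).2⟩) ?_)
      (fun p => (circle a₁ p.1 p.2 (-m) N₁ hN₁).of_injOn Prod.fst ?_ ?_) hD ?_
    · rintro ⟨p₁, p₂⟩ hp ⟨q₁, q₂⟩ hq h
      have hp' := (hsupp hp).1
      have hq' := (hsupp hq).1
      have := hp'.fst; have := hp'.snd; have := hq'.fst; have := hq'.snd
      simp only [Prod.ext_iff] at *
      omega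
    · rintro ⟨p₁, p₃⟩ hp
      obtain ⟨hs, hk⟩ := hsupp hp
      refine ⟨hs.mem₁, ?_⟩
      rw [hs.fst, hs.snd, ← hk]; ring
    · rintro ⟨p₁, p₂⟩ hp ⟨q₁, q₂⟩ hq h
      have hp' := (hsupp hp).1
      have hq' := (hsupp hq).1
      have := hp'.fst; have := hp'.snd; have := hq'.fst; have := hq'.snd
      simp only [Prod.ext_iff] at *
      omega
    · rw [hD2]
      have h1 := powle N₁ hN₁ hX₁
      have h2 := powle N₂ hN₂ hX₂
      have hEC : E ≤ C := by linarith
      have hXμ : 1 ≤ X * μ := one_le_mul_of_one_le_of_one_le hX1 hμ1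
      calc E * N₂ ^ θ * (E * N₁ ^ θ) ≤ C * X ^ θ * (C * X ^ θ) := by gcongr
        _ = C ^ 2 * (X ^ θ * X ^ θ) * 1 := by ring
        _ ≤ C ^ 2 * (X ^ θ * X ^ θ) * (X * μ) := by gcongr
        _ = _ := by ring
  · have hbound : ∀ N, N * N₃ ≤ X * μ → 5 * N₃ * (5 * N) ≤ D ^ 2 := by
      intro N hN
      have h1 : 1 ≤ X ^ θ * X ^ θ := one_le_mul_of_one_le_of_one_le hXθ hXθ
      have h25 : 25 ≤ C ^ 2 := by nlinarith
      rw [hD2]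
      calc 5 * N₃ * (5 * N) = 25 * (N * N₃) := by ring
        _ ≤ C ^ 2 * (X * μ) := by
            have : 0 < X * μ := by positivity
            nlinarith
        _ ≤ C ^ 2 * (X * μ) * (X ^ θ * X ^ θ) := le_mul_of_one_le_right (by positivity) h1
        _ = _ := by ring
    -- for fixed `n₁ ≠ n₂`, the frequency `n₃` lies on a line
    have hrow : ∀ q : (ℤ × ℤ) × (ℤ × ℤ), CardLE {p : (ℤ × ℤ) × (ℤ × ℤ) |
        hTensorK a₁ a₂ a₃ N₁ N₂ N₃ m p.1 q.1 q.2 p.2 ≠ 0} (5 * N₃) := by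
      intro q
      rcases eq_or_ne q.2 q.1 with he | hne
      · refine (CardLE.of_subsingleton ?_).mono subset_rfl (by linarith : (1 : ℝ) ≤ 5 * N₃)
        intro p hp
        exact absurd he (hsupp hp).1.ne₁
      · refine (line_bound' (x := q.2 - q.1) (sub_ne_zero.2 hne) (q.2 - a₃) hN₃ m).of_injOn
          (fun p => q.2 - p.2) ?_ ?_
        · rintro ⟨p₀, p₃⟩ hp
          obtain ⟨hs, hk⟩ := hsupp hp
          exact ⟨sqBox_sub_mem hs.mem₃, hk⟩
        · rintro ⟨p₁, p₂⟩ hp ⟨q₁, q₂⟩ hq h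
          have hp' := (hsupp hp).1
          have hq' := (hsupp hq).1
          have := hp'.fst; have := hp'.snd; have := hq'.fst; have := hq'.snd
          simp only [Prod.ext_iff, Prod.fst_sub, Prod.snd_sub] at *
          omega
    -- for fixed `n ≠ n₃`, the frequencies `n₁` and `n₂` lie on parallel lines
    have hcol : ∀ p : (ℤ × ℤ) × (ℤ × ℤ), CardLE {q : (ℤ × ℤ) × (ℤ × ℤ) |
        hTensorK a₁ a₂ a₃ N₁ N₂ N₃ m p.1 q.1 q.2 p.2 ≠ 0} (5 * N₁) ∧
        CardLE {q : (ℤ × ℤ) × (ℤ × ℤ) |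
        hTensorK a₁ a₂ a₃ N₁ N₂ N₃ m p.1 q.1 q.2 p.2 ≠ 0} (5 * N₂) := by
      intro p
      rcases eq_or_ne p.1 p.2 with he | hne
      · have : {q : (ℤ × ℤ) × (ℤ × ℤ) |
            hTensorK a₁ a₂ a₃ N₁ N₂ N₃ m p.1 q.1 q.2 p.2 ≠ 0}.Subsingleton := by
          intro q hq
          have hs := (hsupp hq).1
          refine absurd (Prod.ext ?_ ?_) hs.ne₁
          · have := hs.fst; rw [he] at this; linarith
          · have := hs.snd; rw [he] at this; linarith
        exact ⟨(CardLE.of_subsingleton this).mono subset_rfl (by linarith),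
          (CardLE.of_subsingleton this).mono subset_rfl (by linarith)⟩
      · constructor
        · refine (line_bound' (x := p.1 - p.2) (sub_ne_zero.2 hne) (p.1 - a₁) hN₁ m).of_injOn
            (fun q => p.1 - q.1) ?_ ?_
          · rintro ⟨q₁, q₂⟩ hq
            obtain ⟨hs, hk⟩ := hsupp hq
            refine ⟨sqBox_sub_mem hs.mem₁, ?_⟩
            simp only [Prod.fst_sub, Prod.snd_sub]
            rw [hs.fst, hs.snd, ← hk]; ring
          · rintro ⟨p₁, p₂⟩ hp ⟨q₁, q₂⟩ hq h
            have hp' := (hsupp hp).1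
            have hq' := (hsupp hq).1
            have := hp'.fst; have := hp'.snd; have := hq'.fst; have := hq'.snd
            simp only [Prod.ext_iff, Prod.fst_sub, Prod.snd_sub] at *
            omega
        · refine (line_bound' (x := p.1 - p.2) (sub_ne_zero.2 hne) (p.2 - a₂) hN₂ m).of_injOn
            (fun q => p.2 - q.2) ?_ ?_
          · rintro ⟨q₁, q₂⟩ hq
            obtain ⟨hs, hk⟩ := hsupp hq
            refine ⟨sqBox_sub_mem hs.mem₂, ?_⟩
            simp only [Prod.fst_sub, Prod.snd_sub]
            rw [hs.fst, hs.snd, ← hk]; ring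
          · rintro ⟨p₁, p₂⟩ hp ⟨q₁, q₂⟩ hq h
            have hp' := (hsupp hp).1
            have hq' := (hsupp hq).1
            have := hp'.fst; have := hp'.snd; have := hq'.fst; have := hq'.snd
            simp only [Prod.ext_iff, Prod.fst_sub, Prod.snd_sub] at *
            omega
    rcases le_total N₃ N₂ with h32 | h23
    · refine schur_test (fun (p : (ℤ × ℤ) × (ℤ × ℤ)) (q : (ℤ × ℤ) × (ℤ × ℤ)) =>
        hTensorK a₁ a₂ a₃ N₁ N₂ N₃ m p.1 q.1 q.2 p.2) (fun _ _ => norm_hTensorK_le)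
        hrow (fun p => (hcol p).1) hD (hbound N₁ ?_)
      rw [hμ, min_eq_right h32]
      gcongr
    · refine schur_test (fun (p : (ℤ × ℤ) × (ℤ × ℤ)) (q : (ℤ × ℤ) × (ℤ × ℤ)) =>
        hTensorK a₁ a₂ a₃ N₁ N₂ N₃ m p.1 q.1 q.2 p.2) (fun _ _ => norm_hTensorK_le)
        hrow (fun p => (hcol p).2) hD (hbound N₂ ?_)
      rw [hμ, min_eq_left h23, mul_comm]
      gcongr

/-- Lemma 4.2 (iii): if `min(N₂,N₃) ≤ N₁`, then `‖h‖₁ ≲ N_max · min(N₂,N₃)` and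
`‖h^m‖₁ ≲_θ N_max^{1/2+θ} min(N₂,N₃)^{1/2}`, uniformly in the centers, the sizes, and `m`. -/
theorem tensor_bound_I_iii (θ : ℝ) (hθ : 0 < θ) :
    ∃ C > (0 : ℝ), ∀ (a₁ a₂ a₃ : ℤ × ℤ) (N₁ N₂ N₃ : ℝ),
      1 ≤ N₁ → 1 ≤ N₂ → 1 ≤ N₃ → min N₂ N₃ ≤ N₁ → ∀ m : ℤ,
      tNorm1 (hTensor a₁ a₂ a₃ N₁ N₂ N₃)
          ≤ ENNReal.ofReal (C * max N₁ (max N₂ N₃) * min N₂ N₃) ∧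
      tNorm1 (hTensorK a₁ a₂ a₃ N₁ N₂ N₃ m)
          ≤ ENNReal.ofReal
              (C * max N₁ (max N₂ N₃) ^ ((1 : ℝ) / 2 + θ) * min N₂ N₃ ^ ((1 : ℝ) / 2)) := by
  obtain ⟨C, hC, hK⟩ := tNorm1_hTensorK_le hθ
  refine ⟨max C 25, lt_max_of_lt_left hC, fun a₁ a₂ a₃ N₁ N₂ N₃ hN₁ hN₂ hN₃ _ m => ⟨?_, ?_⟩⟩
  · refine (tNorm1_hTensor_le a₁ a₂ a₃ hN₂ hN₃).trans (ENNReal.ofReal_le_ofReal ?_)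
    rw [mul_assoc, ← max_mul_min N₂ N₃, mul_assoc]
    have h1 : 0 ≤ min N₂ N₃ := le_min (by linarith) (by linarith)
    have h2 : 0 ≤ max N₂ N₃ := le_max_of_le_left (by linarith)
    exact mul_le_mul (le_max_right _ _)
      (mul_le_mul_of_nonneg_right (le_max_right _ _) h1) (mul_nonneg h2 h1)
      (le_max_of_le_right (by norm_num))
  · refine (hK a₁ a₂ a₃ N₁ N₂ N₃ hN₁ hN₂ hN₃ m).trans (ENNReal.ofReal_le_ofReal ?_)
    have h1 : 0 ≤ min N₂ N₃ := le_min (by linarith) (by linarith)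
    have h2 : 0 ≤ max N₁ (max N₂ N₃) := le_max_of_le_left (by linarith)
    gcongr
    exact le_max_left _ _
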